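/- With probability at least 1−δ over the n i.i.d. samples, every root of the empirical score lies close to the true parameter. Precisely: there exist universal constants C > 0 and γ₀ > 0 such that the following holds. Let λ ∈ ℝ, let x₁,…,xₙ be i.i.d. samples with density f_r(· − λ), and define the empirical score function ŝ(μ) = Σ_{i=1}^n s_r(x_i − μ). Suppose ε_max > 0, δ ∈ (0,1), and γ ≥ γ₀ satisfy: (i) r ≥ 2ε_max, (ii) r²√(I_r) ≥ γ·ε_max, (iii) (log(1/δ))/n ≤ 1/γ², and (iv) log(1/(r√(I_r))) ≤ (1/γ)·log(1/δ)/log log(1/δ). Then with probability at least 1−δ, for every ε with (1 + C/γ)·√(2·log(1/δ)/(n·I_r)) < ε ≤ ε_max, one has ŝ(λ−ε) < 0 and ŝ(λ+ε) > 0. -/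

import Mathlib

/-!
Rescaling the line by `r` reduces the theorem to unit smoothing, and reflecting it reduces the roots
on the left of the true parameter to those on the right. So let `r = 1`, `lam = 0`, let `s` be the
score, `I` its second moment and `L = log (1 / δ)`; it has to be shown that
`∑ s (xᵢ - a) ≤ 0` for some `(1 + C / γ) √(2 L / (n I)) < a ≤ √I / γ` happens with probability at most
`δ / 2`.

* *Moments.* Given `X = x`, the noise `Z` has a posterior law, and `s`, `s'` and `s''` are polynomial
  expressions in its moments; in particular `s' ≥ -1`. All of them are bounded through the weight
  `wt`, the 64th root of the posterior mean of `exp (Z² / 8)`, whose moments up to order `64` are at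
  most a universal constant. Together with Cauchy-Schwarz and integration by parts this gives
  `E |s|³ exp |s| ≲ √I`, `E (s')² ≲ √I` and `E (s(X) - s(X - b)) / b ≤ -I + O(√I b)`.
* *At the true parameter* (`sum_tail`) Chernoff's bound for `-∑ s (xᵢ)` at the level
  `√(2 L n I)` would give probability about `δ`. The tilted law is spread out, so an Esseen-type
  smoothing inequality (`tail_le_of_tilted`) improves this to a prefactor strictly below `1/2`, which
  is what makes room for the second side.
* *Curvature* (`pq_tail`, `grid_arith`). For a fixed shift `b` the sum of the difference quotients
  `(s (xᵢ) - s (xᵢ - b)) / b` is at most `-(1 - η) n I` outside an event of exponentially small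
  probability. A grid of shifts costs a union bound over a number of points polynomial in `n`, and `s' ≥ -1`
  carries the bound from the grid to all shifts.

The two bounds together make the score positive on the whole range (`score_pos_of_good`,
`one_sided`), and `one_sided_rescaled` and `two_sided` transport this to scale `r` and both sides.
The only role of the condition on `log (1 / (r √I))` is to force `L ≥ 1`.
-/

open MeasureTheory Real

noncomputable section

/-- The Gaussian density with mean 0 and variance `r ^ 2`. -/
def gaussPdf (r x : ℝ) : ℝ :=
  Real.exp (-(x ^ 2) / (2 * r ^ 2)) / Real.sqrt (2 * Real.pi * r ^ 2)

/-- The `r`-smoothed density `f_r`, i.e. the density of `Y + Z` where `Y ~ f` and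
`Z ~ N(0, r²)` independent. -/
def smoothed (f : ℝ → ℝ) (r x : ℝ) : ℝ := ∫ y, f y * gaussPdf r (x - y)

/-- The score function `s_r = f_r' / f_r` of the smoothed density. -/
def score (f : ℝ → ℝ) (r x : ℝ) : ℝ :=
  deriv (fun t => smoothed f r t) x / smoothed f r x

/-- The Fisher information `I_r = E_{x ~ f_r}[s_r(x)²]` of the smoothed density. -/
def fisherInfo (f : ℝ → ℝ) (r : ℝ) : ℝ := ∫ x, score f r x ^ 2 * smoothed f r x

/-- `f` is a probability density on `ℝ`. -/
def IsDensity (f : ℝ → ℝ) : Prop :=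
  (∀ x, 0 ≤ f x) ∧ MeasureTheory.Integrable f ∧ (∫ x, f x) = 1

/-! ### Mixtures of translated kernels -/

/-- The mixture `x ↦ ∫ f(y) K(x - y) dy` of translates of a kernel `K`; `smoothed f r` is the mixture
of the Gaussian kernel. If `K = ψ · gaussPdf 1`, then `mix f K x / smoothed f 1 x` is the posterior
mean `E[ψ(Z) | Y + Z = x]`. -/
def mix (f K : ℝ → ℝ) (x : ℝ) : ℝ := ∫ y, f y * K (x - y)

/-- Kernels that are continuous and bounded. -/
def BddKer (K : ℝ → ℝ) : Prop := Continuous K ∧ ∃ B, ∀ z, |K z| ≤ B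

lemma smoothed_eq_mix (f : ℝ → ℝ) (r : ℝ) : smoothed f r = mix f (gaussPdf r) := rfl

section mix
variable {f : ℝ → ℝ} (hf : IsDensity f) {K K' K₁ K₂ : ℝ → ℝ}
include hf

lemma mix_integrable (hK : BddKer K) (x : ℝ) : Integrable (fun y => f y * K (x - y)) := by
  obtain ⟨hc, B, hB⟩ := hK
  refine Integrable.mul_bdd (c := B) hf.2.1 ?_ ?_
  · exact (hc.comp (by fun_prop)).aestronglyMeasurable
  · exact Filter.Eventually.of_forall fun y => hB _

lemma mix_mono (hK₁ : BddKer K₁) (hK₂ : BddKer K₂) (h : ∀ z, K₁ z ≤ K₂ z) (x : ℝ) :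
    mix f K₁ x ≤ mix f K₂ x :=
  integral_mono (mix_integrable hf hK₁ x) (mix_integrable hf hK₂ x)
    fun y => mul_le_mul_of_nonneg_left (h _) (hf.1 y)

lemma mix_abs_le (hK₂ : BddKer K₂) (h : ∀ z, |K₁ z| ≤ K₂ z) (x : ℝ) :
    |mix f K₁ x| ≤ mix f K₂ x := by
  rw [mix, ← Real.norm_eq_abs]
  refine norm_integral_le_of_norm_le (mix_integrable hf hK₂ x) (Filter.Eventually.of_forall fun y => ?_)
  rw [norm_mul, Real.norm_of_nonneg (hf.1 y)]
  exact mul_le_mul_of_nonneg_left (h _) (hf.1 y)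

omit hf in
lemma mix_const_mul (c x : ℝ) : mix f (fun z => c * K z) x = c * mix f K x := by
  simp only [mix, ← integral_const_mul]
  congr 1; ext y; ring

lemma mix_add (hK₁ : BddKer K₁) (hK₂ : BddKer K₂) (x : ℝ) :
    mix f (fun z => K₁ z + K₂ z) x = mix f K₁ x + mix f K₂ x := by
  simp only [mix]
  rw [← integral_add (mix_integrable hf hK₁ x) (mix_integrable hf hK₂ x)]
  congr 1; ext y; ring

omit hf in
lemma mix_shift (u x : ℝ) : mix f K (x + u) = mix f (fun z => K (z + u)) x := by
  simp only [mix]; congr 1; ext y; congr 2; ring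

lemma mix_continuous (hK : BddKer K) : Continuous (mix f K) := by
  obtain ⟨hc, B, hB⟩ := hK
  refine continuous_of_dominated (bound := fun y => |f y| * B) ?_ ?_ ?_ ?_
  · intro x; exact (mix_integrable hf ⟨hc, B, hB⟩ x).aestronglyMeasurable
  · intro x; filter_upwards with y
    rw [norm_mul, Real.norm_eq_abs, Real.norm_eq_abs]
    exact mul_le_mul_of_nonneg_left (hB _) (abs_nonneg _)
  · exact hf.2.1.abs.mul_const B
  · filter_upwards with y
    exact continuous_const.mul (hc.comp (by fun_prop))

lemma mix_hasDerivAt (hK : BddKer K) (hK' : BddKer K') (h : ∀ z, HasDerivAt K (K' z) z) (x : ℝ) :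
    HasDerivAt (mix f K) (mix f K' x) x := by
  obtain ⟨B, hB⟩ := hK'.2
  refine (hasDerivAt_integral_of_dominated_loc_of_deriv_le (μ := volume) (s := Set.univ)
    (F := fun x y => f y * K (x - y)) (F' := fun x y => f y * K' (x - y))
    (bound := fun y => |f y| * B) Filter.univ_mem ?_ ?_ ?_ ?_ ?_ ?_).2
  · exact Filter.Eventually.of_forall fun x => (mix_integrable hf hK x).aestronglyMeasurable
  · exact mix_integrable hf hK x
  · exact (mix_integrable hf hK' x).aestronglyMeasurable
  · filter_upwards with y x _
    rw [norm_mul, Real.norm_eq_abs, Real.norm_eq_abs]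
    exact mul_le_mul_of_nonneg_left (hB _) (abs_nonneg _)
  · exact hf.2.1.abs.mul_const B
  · filter_upwards with y x _
    have := (h (x - y)).comp x ((hasDerivAt_id x).sub_const y)
    simpa using this.const_mul (f y)

lemma mix_integrable_total (hK : Integrable K) : Integrable (mix f K) :=
  Integrable.integrable_convolution (ContinuousLinearMap.mul ℝ ℝ) hf.2.1 hK

lemma integral_mix (hK : Integrable K) : ∫ x, mix f K x = ∫ z, K z := by
  have := integral_convolution (μ := volume) (ν := volume) (ContinuousLinearMap.mul ℝ ℝ) hf.2.1 hK
  rw [hf.2.2] at this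
  simpa [convolution, mix] using this

end mix

/-! ### The Gaussian kernel and its derivatives -/

lemma gaussPdf_one (z : ℝ) : gaussPdf 1 z = exp (-(z ^ 2) / 2) / √(2 * π) := by
  simp [gaussPdf]

lemma gaussPdf_pos (z : ℝ) : 0 < gaussPdf 1 z := by
  rw [gaussPdf_one]; positivity

/-- The Gaussian kernel reweighted by `exp (j z² / 512)`. -/
def ker (j : ℕ) (z : ℝ) : ℝ := exp (j * z ^ 2 / 512) * gaussPdf 1 z

lemma ker_zero : ker 0 = gaussPdf 1 := by ext z; simp [ker]

lemma ker_pos (j : ℕ) (z : ℝ) : 0 < ker j z := mul_pos (exp_pos _) (gaussPdf_pos _)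

lemma gaussPdf_le_one (z : ℝ) : gaussPdf 1 z ≤ exp (-(z ^ 2) / 2) := by
  rw [gaussPdf_one]
  apply div_le_self (exp_pos _).le
  rw [Real.one_le_sqrt]
  nlinarith [Real.pi_gt_three]

lemma ker_le_one {j : ℕ} (hj : j ≤ 64) (z : ℝ) : ker j z ≤ 1 := by
  calc ker j z ≤ exp (j * z ^ 2 / 512) * exp (-(z ^ 2) / 2) :=
        mul_le_mul_of_nonneg_left (gaussPdf_le_one z) (exp_pos _).le
    _ = exp (-((256 - j) * z ^ 2 / 512)) := by rw [← exp_add]; congr 1; ring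
    _ ≤ 1 := by
        rw [exp_le_one_iff]
        have : (j : ℝ) ≤ 64 := by exact_mod_cast hj
        nlinarith [mul_nonneg (by linarith : (0 : ℝ) ≤ 256 - j) (sq_nonneg z)]

lemma gaussPdf_continuous : Continuous (gaussPdf 1) := by
  unfold gaussPdf; fun_prop

lemma ker_continuous (j : ℕ) : Continuous (ker j) := by
  have := gaussPdf_continuous
  unfold ker; fun_prop

lemma ker_bdd {j : ℕ} (hj : j ≤ 64) : BddKer (ker j) :=
  ⟨ker_continuous j, 1, fun z => by rw [abs_of_pos (ker_pos j z)]; exact ker_le_one hj z⟩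

lemma BddKer.of_le {K : ℝ → ℝ} {B : ℝ} {j : ℕ} (hj : j ≤ 64) (hc : Continuous K)
    (h : ∀ z, |K z| ≤ B * ker j z) : BddKer K := by
  have hB : 0 ≤ B := by
    have := (abs_nonneg _).trans (h 0)
    exact nonneg_of_mul_nonneg_left this (ker_pos j 0)
  exact ⟨hc, B, fun z => (h z).trans (mul_le_of_le_one_right hB (ker_le_one hj z))⟩

lemma BddKer.const_mul {K : ℝ → ℝ} (h : BddKer K) (c : ℝ) : BddKer (fun z => c * K z) := by
  obtain ⟨hc, B, hB⟩ := h
  refine ⟨by fun_prop, |c| * B, fun z => ?_⟩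
  rw [abs_mul]; exact mul_le_mul_of_nonneg_left (hB z) (abs_nonneg _)

lemma BddKer.add {K₁ K₂ : ℝ → ℝ} (h₁ : BddKer K₁) (h₂ : BddKer K₂) :
    BddKer (fun z => K₁ z + K₂ z) := by
  obtain ⟨hc, B, hB⟩ := h₁
  obtain ⟨hc', B', hB'⟩ := h₂
  exact ⟨by fun_prop, B + B', fun z => (abs_add_le _ _).trans (add_le_add (hB z) (hB' z))⟩

lemma ker_integrable {j : ℕ} (hj : j ≤ 64) : Integrable (ker j) := by
  refine Integrable.mono' (g := fun z => exp (-(1 / 4) * z ^ 2))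
    (integrable_exp_neg_mul_sq (by norm_num)) (ker_continuous j).aestronglyMeasurable ?_
  filter_upwards with z
  rw [Real.norm_of_nonneg (ker_pos j z).le]
  calc ker j z ≤ exp (j * z ^ 2 / 512) * exp (-(z ^ 2) / 2) :=
        mul_le_mul_of_nonneg_left (gaussPdf_le_one z) (exp_pos _).le
    _ = exp (-((256 - j) * z ^ 2 / 512)) := by rw [← exp_add]; congr 1; ring
    _ ≤ _ := by
        rw [exp_le_exp]
        have : (j : ℝ) ≤ 64 := by exact_mod_cast hj
        nlinarith [mul_nonneg (by linarith : (0 : ℝ) ≤ 64 - j) (sq_nonneg z)]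

lemma integral_gaussPdf : ∫ z, gaussPdf 1 z = 1 := by
  have h : ∀ z, gaussPdf 1 z = exp (-(1 / 2) * z ^ 2) / √(2 * π) := fun z => by
    rw [gaussPdf_one]; congr 2; ring
  simp_rw [h, integral_div, integral_gaussian]
  rw [show π / (1 / 2) = 2 * π by ring]
  exact div_self (by positivity)

/-- `exp (z² / 512)` dominates `exp |z|` up to a constant. -/
lemma exp_abs_le_sq (z : ℝ) : exp |z| ≤ exp 128 * exp (z ^ 2 / 512) := by
  rw [← exp_add, exp_le_exp]
  nlinarith [sq_nonneg (|z| - 256), sq_abs z]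

lemma gaussPdf_hasDerivAt (z : ℝ) : HasDerivAt (gaussPdf 1) (-z * gaussPdf 1 z) z := by
  have h : gaussPdf 1 = fun z => exp (-(z ^ 2) / 2) / √(2 * π) := by ext z; exact gaussPdf_one z
  rw [h]
  have h1 : HasDerivAt (fun z : ℝ => -(z ^ 2) / 2) (-z) z := by
    have := ((hasDerivAt_pow 2 z).neg).div_const 2
    convert! this using 1; simp; ring
  have := (h1.exp).div_const (√(2 * π))
  convert! this using 1; ring

/-- The first three derivatives of the Gaussian kernel. -/
def k1 (z : ℝ) : ℝ := -z * gaussPdf 1 z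
/-- See `k1`. -/
def k2 (z : ℝ) : ℝ := (z ^ 2 - 1) * gaussPdf 1 z
/-- See `k1`. -/
def k3 (z : ℝ) : ℝ := (3 * z - z ^ 3) * gaussPdf 1 z

lemma k1_hasDerivAt (z : ℝ) : HasDerivAt k1 (k2 z) z := by
  have := ((hasDerivAt_id z).neg).mul (gaussPdf_hasDerivAt z)
  convert! this using 1; simp [k2]; ring

lemma k2_hasDerivAt (z : ℝ) : HasDerivAt k2 (k3 z) z := by
  have := (((hasDerivAt_pow 2 z)).sub_const 1).mul (gaussPdf_hasDerivAt z)
  convert! this using 1; simp [k3]; ring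

lemma poly_le (z : ℝ) : 1 + |z| + z ^ 2 + |z| ^ 3 ≤ 600000 * exp (z ^ 2 / 512) := by
  have h1 := Real.quadratic_le_exp_of_nonneg (x := z ^ 2 / 512) (by positivity)
  have h2 : |z| ^ 2 = z ^ 2 := sq_abs z
  have h3 : z ^ 4 = |z| ^ 4 := by rw [show z^4 = (z^2)^2 by ring, ← h2]; ring
  nlinarith [sq_nonneg (|z| - 1), abs_nonneg z, sq_nonneg (|z|^2 - |z|), sq_nonneg z, sq_nonneg (|z|)]

lemma k_bounds (z : ℝ) : |k1 z| ≤ 600000 * ker 1 z ∧ |k2 z| ≤ 600000 * ker 1 z ∧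
    |k3 z| ≤ 1800000 * ker 1 z := by
  have hg := gaussPdf_pos z
  have hp := poly_le z
  have ha := abs_nonneg z
  have ha3 := pow_nonneg ha 3
  have key : ∀ p c : ℝ, 0 ≤ c → |p| ≤ c * (1 + |z| + z ^ 2 + |z| ^ 3) →
      |p * gaussPdf 1 z| ≤ c * 600000 * ker 1 z := by
    intro p c hc h
    rw [abs_mul, abs_of_pos hg, ker, Nat.cast_one, one_mul, ← mul_assoc]
    refine mul_le_mul_of_nonneg_right (h.trans ?_) hg.le
    nlinarith
  refine ⟨?_, ?_, ?_⟩
  · have := key (-z) 1 zero_le_one (by rw [abs_neg]; nlinarith [sq_nonneg z])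
    simpa [k1] using this
  · have := key (z ^ 2 - 1) 1 zero_le_one (by rw [abs_le]; constructor <;> nlinarith [sq_nonneg z])
    simpa [k2] using this
  · have := key (3 * z - z ^ 3) 3 (by norm_num) (by
      refine (abs_sub _ _).trans ?_
      rw [abs_mul, abs_pow, abs_of_pos (by norm_num : (0:ℝ) < 3)]; nlinarith [sq_nonneg z])
    norm_num at this; simpa [k3] using this

lemma k1_bdd : BddKer k1 := BddKer.of_le (j := 1) (by norm_num)
  (by have := gaussPdf_continuous; unfold k1; fun_prop) fun z => (k_bounds z).1
lemma k2_bdd : BddKer k2 := BddKer.of_le (j := 1) (by norm_num)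
  (by have := gaussPdf_continuous; unfold k2; fun_prop) fun z => (k_bounds z).2.1
lemma k3_bdd : BddKer k3 := BddKer.of_le (j := 1) (by norm_num)
  (by have := gaussPdf_continuous; unfold k3; fun_prop) fun z => (k_bounds z).2.2
lemma gaussPdf_bdd : BddKer (gaussPdf 1) := ker_zero ▸ ker_bdd (by norm_num : 0 ≤ 64)

lemma gaussPdf_add (z u : ℝ) : gaussPdf 1 (z + u) = gaussPdf 1 z * exp (-(u * z) - u ^ 2 / 2) := by
  rw [gaussPdf_one, gaussPdf_one, div_mul_eq_mul_div, ← exp_add]; congr 2; ring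

/-! ### Pointwise control by posterior exponential moments -/

/-- The posterior exponential moment `E[exp (Z² / 512) | Y + Z = x]`. -/
def postExp (f : ℝ → ℝ) (x : ℝ) : ℝ := mix f (ker 1) x / mix f (ker 0) x

/-- The weight `E[exp (Z² / 8) | Y + Z = x] ^ (1 / 64)`. Its powers up to `64` have expectation bounded
by a universal constant, and the score and its first two derivatives are bounded by such powers. -/
def wt (f : ℝ → ℝ) (x : ℝ) : ℝ := (mix f (ker 64) x / mix f (ker 0) x) ^ (1 / 64 : ℝ)

/-- The posterior second moment `E[Z² | Y + Z = x]`. -/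
def postSq (f : ℝ → ℝ) (x : ℝ) : ℝ := mix f k2 x / mix f (ker 0) x + 1

/-- The score of the `1`-smoothed density, and its first two derivatives `sc1`, `sc2`. -/
def sc (f : ℝ → ℝ) (x : ℝ) : ℝ := mix f k1 x / mix f (ker 0) x
/-- See `sc`. -/
def sc1 (f : ℝ → ℝ) (x : ℝ) : ℝ := mix f k2 x / mix f (ker 0) x - sc f x ^ 2
/-- See `sc`. -/
def sc2 (f : ℝ → ℝ) (x : ℝ) : ℝ :=
  mix f k3 x / mix f (ker 0) x - mix f k2 x / mix f (ker 0) x * sc f x - 2 * sc f x * sc1 f x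

section weight
variable {f : ℝ → ℝ} (hf : IsDensity f)
include hf

lemma mix_ker_pos {j : ℕ} (hj : j ≤ 64) (x : ℝ) : 0 < mix f (ker j) x := by
  have hint := mix_integrable hf (ker_bdd hj) x
  rw [mix, integral_pos_iff_support_of_nonneg (fun y => mul_nonneg (hf.1 y) (ker_pos j _).le) hint]
  have h1 : Function.support (fun y => f y * ker j (x - y)) = Function.support f := by
    ext y; simp [(ker_pos j (x - y)).ne']
  rw [h1, ← integral_pos_iff_support_of_nonneg (fun y => hf.1 y) hf.2.1, hf.2.2]
  exact one_pos

lemma F_pos (x : ℝ) : 0 < mix f (ker 0) x := mix_ker_pos hf (by norm_num) x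

omit hf in
lemma ker_mono {i j : ℕ} (h : i ≤ j) (z : ℝ) : ker i z ≤ ker j z := by
  refine mul_le_mul_of_nonneg_right (exp_le_exp.2 ?_) (gaussPdf_pos z).le
  have : (i : ℝ) ≤ j := by exact_mod_cast h
  gcongr

lemma wt_pow (x : ℝ) : wt f x ^ 64 = mix f (ker 64) x / mix f (ker 0) x := by
  rw [wt, ← Real.rpow_natCast, ← Real.rpow_mul (div_pos (mix_ker_pos hf le_rfl x) (F_pos hf x)).le]
  norm_num

lemma one_le_wt (x : ℝ) : 1 ≤ wt f x := by
  apply Real.one_le_rpow _ (by norm_num)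
  rw [one_le_div (F_pos hf x)]
  exact mix_mono hf (ker_bdd (by norm_num)) (ker_bdd le_rfl) (ker_mono (by norm_num)) x

lemma wt_pos (x : ℝ) : 0 < wt f x := one_pos.trans_le (one_le_wt hf x)

/-- Hölder's inequality for the posterior expectation, obtained by integrating the weighted AM-GM
inequality. -/
lemma mix_ker_le {j : ℕ} (hj : j ≤ 64) (x : ℝ) : mix f (ker j) x ≤ wt f x ^ j * mix f (ker 0) x := by
  set q := wt f x with hq
  have hq0 : 0 < q := wt_pos hf x
  have hj' : (j : ℝ) ≤ 64 := by exact_mod_cast hj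
  have key : ∀ z, ker j z ≤ ((j / 64 : ℝ) / q ^ (64 - j)) * ker 64 z
      + ((1 - j / 64 : ℝ) * q ^ j) * ker 0 z := by
    intro z
    have ha : 0 < exp (z ^ 2 / 512) := exp_pos _
    set a := exp (z ^ 2 / 512) with hadef
    have h := Real.geom_mean_le_arith_mean2_weighted (w₁ := j / 64) (w₂ := 1 - j / 64)
      (p₁ := a ^ 64) (p₂ := q ^ 64) (by positivity) (by linarith) (by positivity) (by positivity)
      (by ring)
    have e1 : (a ^ 64) ^ (j / 64 : ℝ) = a ^ j := by
      rw [← Real.rpow_natCast a 64, ← Real.rpow_mul ha.le, ← Real.rpow_natCast a j]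
      congr 1; push_cast; ring
    have e2 : (q ^ 64) ^ (1 - j / 64 : ℝ) = q ^ (64 - j) := by
      rw [← Real.rpow_natCast q 64, ← Real.rpow_mul hq0.le, ← Real.rpow_natCast q (64 - j)]
      congr 1; rw [Nat.cast_sub hj]; push_cast; ring
    rw [e1, e2] at h
    have e3 : q ^ 64 = q ^ j * q ^ (64 - j) := by rw [← pow_add]; congr 1; omega
    have hp : 0 < q ^ (64 - j) := by positivity
    have h2 : a ^ j ≤ (j / 64 : ℝ) / q ^ (64 - j) * a ^ 64 + (1 - j / 64 : ℝ) * q ^ j := by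
      rw [← mul_le_mul_iff_left₀ hp]
      refine h.trans (le_of_eq ?_)
      rw [e3]; field_simp
    have k : ∀ i : ℕ, ker i z = a ^ i * gaussPdf 1 z := by
      intro i; rw [ker, hadef, ← exp_nat_mul]; congr 2; ring
    rw [k, k, k, pow_zero, one_mul]
    have := mul_le_mul_of_nonneg_right h2 (gaussPdf_pos z).le
    linarith
  have h1 := mix_mono hf (ker_bdd hj)
    (((ker_bdd le_rfl).const_mul _).add ((ker_bdd (by norm_num)).const_mul _)) key x
  rw [mix_add hf ((ker_bdd le_rfl).const_mul _) ((ker_bdd (by norm_num)).const_mul _),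
    mix_const_mul, mix_const_mul] at h1
  have hF := F_pos hf x
  have e : mix f (ker 64) x = q ^ 64 * mix f (ker 0) x := by
    rw [hq, wt_pow hf]; field_simp
  have e3 : q ^ 64 = q ^ j * q ^ (64 - j) := by rw [← pow_add]; congr 1; omega
  rw [e, e3] at h1
  refine h1.trans (le_of_eq ?_)
  have hp : 0 < q ^ (64 - j) := by positivity
  field_simp; ring

lemma postExp_le (x : ℝ) : postExp f x ≤ wt f x := by
  rw [postExp, div_le_iff₀ (F_pos hf x)]
  simpa using mix_ker_le hf (by norm_num : 1 ≤ 64) x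

lemma one_le_postExp (x : ℝ) : 1 ≤ postExp f x := by
  rw [postExp, one_le_div (F_pos hf x)]
  exact mix_mono hf (ker_bdd (by norm_num)) (ker_bdd (by norm_num)) (ker_mono (by norm_num)) x

/-- Jensen's inequality for the posterior expectation, obtained by integrating a tangent-line bound. -/
lemma exp_postSq_le (x : ℝ) : exp (postSq f x / 512) ≤ postExp f x := by
  have hF := F_pos hf x
  set G := postExp f x with hG
  have hG0 : 0 < G := one_pos.trans_le (one_le_postExp hf x)
  rw [← Real.le_log_iff_exp_le hG0]
  have key : ∀ z, (1 / 512) * k2 z + (1 / 512) * ker 0 z ≤ (1 / G) * ker 1 z + (log G - 1) * ker 0 z := by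
    intro z
    have h := Real.add_one_le_exp (z ^ 2 / 512 - log G)
    rw [exp_sub, exp_log hG0] at h
    have h2 := mul_le_mul_of_nonneg_right h (gaussPdf_pos z).le
    rw [ker_zero, ker, k2, Nat.cast_one, one_mul]
    have : exp (z ^ 2 / 512) / G * gaussPdf 1 z = 1 / G * (exp (z ^ 2 / 512) * gaussPdf 1 z) := by
      ring
    linarith
  have b0 : BddKer (ker 0) := ker_bdd (by norm_num)
  have b1 : BddKer (ker 1) := ker_bdd (by norm_num)
  have h1 := mix_mono hf ((k2_bdd.const_mul _).add (b0.const_mul _))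
    ((b1.const_mul _).add (b0.const_mul _)) key x
  rw [mix_add hf (k2_bdd.const_mul _) (b0.const_mul _), mix_add hf (b1.const_mul _) (b0.const_mul _),
    mix_const_mul, mix_const_mul, mix_const_mul, mix_const_mul] at h1
  have e : mix f (ker 1) x = G * mix f (ker 0) x := by rw [hG, postExp]; field_simp
  rw [e] at h1
  have e2 : postSq f x * mix f (ker 0) x = mix f k2 x + mix f (ker 0) x := by
    rw [postSq]; field_simp
  have e3 : 1 / G * (G * mix f (ker 0) x) = mix f (ker 0) x := by field_simp
  rw [e3] at h1
  have : postSq f x / 512 * mix f (ker 0) x ≤ log G * mix f (ker 0) x := by linarith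
  exact le_of_mul_le_mul_right this hF

lemma sc_sq_le (x : ℝ) : sc f x ^ 2 ≤ postSq f x := by
  have hF := F_pos hf x
  set s := sc f x with hs
  have key : ∀ z, 0 ≤ (k2 z + (1 + s ^ 2) * ker 0 z) + (-(2 * s)) * k1 z := by
    intro z
    have : (k2 z + (1 + s ^ 2) * ker 0 z) + (-(2 * s)) * k1 z = (z + s) ^ 2 * gaussPdf 1 z := by
      rw [ker_zero, k1, k2]; ring
    rw [this]; exact mul_nonneg (sq_nonneg _) (gaussPdf_pos z).le
  have b0 : BddKer (ker 0) := ker_bdd (by norm_num)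
  have hb := (k2_bdd.add (b0.const_mul (1 + s ^ 2)))
  have h0 : 0 ≤ mix f (fun z => (k2 z + (1 + s ^ 2) * ker 0 z) + (-(2 * s)) * k1 z) x :=
    integral_nonneg fun y => mul_nonneg (hf.1 y) (key _)
  rw [mix_add hf hb (k1_bdd.const_mul _), mix_add hf k2_bdd (b0.const_mul _), mix_const_mul,
    mix_const_mul] at h0
  have e1 : mix f k1 x = s * mix f (ker 0) x := by rw [hs, sc]; field_simp
  have e2 : postSq f x * mix f (ker 0) x = mix f k2 x + mix f (ker 0) x := by
    rw [postSq]; field_simp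
  rw [e1] at h0
  have : s ^ 2 * mix f (ker 0) x ≤ postSq f x * mix f (ker 0) x := by rw [e2]; nlinarith
  exact le_of_mul_le_mul_right this hF

omit hf in
lemma sc1_eq (x : ℝ) : sc1 f x = postSq f x - 1 - sc f x ^ 2 := by rw [sc1, postSq]; ring

lemma neg_one_le_sc1 (x : ℝ) : -1 ≤ sc1 f x := by
  have := sc_sq_le hf x; rw [sc1_eq]; linarith

lemma abs_sc1_le (x : ℝ) : |sc1 f x| ≤ 1 + postSq f x := by
  have h := sc_sq_le hf x
  rw [sc1_eq, abs_le]
  constructor <;> nlinarith [sq_nonneg (sc f x)]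

lemma ratio_le {K : ℝ → ℝ} {B : ℝ} (hK : ∀ z, |K z| ≤ B * ker 1 z) (x : ℝ) :
    |mix f K x / mix f (ker 0) x| ≤ B * postExp f x := by
  have hF := F_pos hf x
  rw [abs_div, abs_of_pos hF, postExp, ← mul_div_assoc]
  gcongr
  have := mix_abs_le hf ((ker_bdd (by norm_num : 1 ≤ 64)).const_mul B) hK x
  rwa [mix_const_mul] at this

lemma abs_sc_le (x : ℝ) : |sc f x| ≤ 600000 * postExp f x := ratio_le hf (fun z => (k_bounds z).1) x

lemma abs_sc1_le' (x : ℝ) : |sc1 f x| ≤ 10 ^ 12 * postExp f x ^ 2 := by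
  have h1 := abs_sc_le hf x
  have h2 : |mix f k2 x / mix f (ker 0) x| ≤ 600000 * postExp f x :=
    ratio_le hf (fun z => (k_bounds z).2.1) x
  have hG := one_le_postExp hf x
  have h3 : sc f x ^ 2 ≤ (600000 * postExp f x) ^ 2 := by
    rw [← sq_abs]; gcongr
  rw [sc1]
  refine (abs_sub _ _).trans ?_
  rw [abs_of_nonneg (sq_nonneg (sc f x))]
  nlinarith

lemma abs_sc2_le (x : ℝ) : |sc2 f x| ≤ 10 ^ 19 * postExp f x ^ 3 := by
  have h1 := abs_sc_le hf x
  have h2 : |mix f k2 x / mix f (ker 0) x| ≤ 600000 * postExp f x :=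
    ratio_le hf (fun z => (k_bounds z).2.1) x
  have h3 : |mix f k3 x / mix f (ker 0) x| ≤ 1800000 * postExp f x :=
    ratio_le hf (fun z => (k_bounds z).2.2) x
  have h4 := abs_sc1_le' hf x
  have hG := one_le_postExp hf x
  have h5 : |mix f k2 x / mix f (ker 0) x| * |sc f x| ≤ (600000 * postExp f x) * (600000 * postExp f x) := by
    gcongr
  have h6 : |sc f x| * |sc1 f x| ≤ (600000 * postExp f x) * (10 ^ 12 * postExp f x ^ 2) := by
    gcongr
  rw [sc2]
  refine (abs_sub _ _).trans ((add_le_add_left (abs_sub _ _) _).trans ?_)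
  rw [abs_mul, abs_mul, abs_mul, abs_of_pos (by norm_num : (0:ℝ) < 2)]
  have g1 : postExp f x ≤ postExp f x ^ 3 := by nlinarith [sq_nonneg (postExp f x)]
  have g2 : postExp f x ^ 2 ≤ postExp f x ^ 3 := by nlinarith [sq_nonneg (postExp f x)]
  nlinarith

lemma F_hasDerivAt (x : ℝ) : HasDerivAt (mix f (ker 0)) (mix f k1 x) x := by
  rw [ker_zero]
  exact mix_hasDerivAt hf gaussPdf_bdd k1_bdd gaussPdf_hasDerivAt x

lemma score_eq : score f 1 = sc f := by
  ext x
  have := (F_hasDerivAt hf x).deriv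
  rw [ker_zero] at this
  rw [score, sc, smoothed_eq_mix, ker_zero, ← this]

lemma sc_hasDerivAt (x : ℝ) : HasDerivAt (sc f) (sc1 f x) x := by
  have hF := F_pos hf x
  have h := (mix_hasDerivAt hf k1_bdd k2_bdd k1_hasDerivAt x).div (F_hasDerivAt hf x) hF.ne'
  convert! h using 1
  rw [sc1, sc]; field_simp

lemma sc1_hasDerivAt (x : ℝ) : HasDerivAt (sc1 f) (sc2 f x) x := by
  have hF := F_pos hf x
  have h := ((mix_hasDerivAt hf k2_bdd k3_bdd k2_hasDerivAt x).div (F_hasDerivAt hf x) hF.ne').sub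
    ((sc_hasDerivAt hf x).pow 2)
  convert! h using 1
  rw [sc2, sc1, sc]; norm_num; field_simp

lemma sc_continuous : Continuous (sc f) :=
  continuous_iff_continuousAt.2 fun x => (sc_hasDerivAt hf x).continuousAt

lemma sc1_continuous : Continuous (sc1 f) :=
  continuous_iff_continuousAt.2 fun x => (sc1_hasDerivAt hf x).continuousAt

lemma F_continuous : Continuous (mix f (ker 0)) := mix_continuous hf (ker_bdd (by norm_num))

lemma sc2_continuous : Continuous (sc2 f) := by
  have h0 := F_continuous hf
  have h2 := mix_continuous hf k2_bdd
  have h3 := mix_continuous hf k3_bdd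
  have h := sc_continuous hf
  have h' := sc1_continuous hf
  have hne : ∀ x, mix f (ker 0) x ≠ 0 := fun x => (F_pos hf x).ne'
  unfold sc2
  exact ((h3.div h0 hne).sub ((h2.div h0 hne).mul h)).sub ((continuous_const.mul h).mul h')

lemma wt_continuous : Continuous (wt f) := by
  have hne : ∀ x, mix f (ker 0) x ≠ 0 := fun x => (F_pos hf x).ne'
  exact ((mix_continuous hf (ker_bdd le_rfl)).div (F_continuous hf) hne).rpow_const
    fun x => Or.inr (by norm_num)

/-- The score decreases at rate at most one. -/
lemma sc_sub_le {a b : ℝ} (hab : a ≤ b) (x : ℝ) : sc f (x - b) - sc f (x - a) ≤ b - a := by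
  have hm : Monotone (fun x => sc f x + x) := by
    refine monotone_of_hasDerivAt_nonneg (f' := fun x => sc1 f x + 1)
      (fun x => (sc_hasDerivAt hf x).add (hasDerivAt_id x)) fun x => ?_
    have := neg_one_le_sc1 hf x
    simp only [Pi.zero_apply]; linarith
  have := hm (by linarith : x - b ≤ x - a)
  simp only at this; linarith

lemma exp_abs_sc_le (x : ℝ) : exp |sc f x| ≤ exp 128 * wt f x := by
  have h1 := exp_abs_le_sq (sc f x)
  have h2 : exp (sc f x ^ 2 / 512) ≤ wt f x := by
    refine le_trans (exp_le_exp.2 ?_) ((exp_postSq_le hf x).trans (postExp_le hf x))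
    linarith [sc_sq_le hf x]
  exact h1.trans (by gcongr)

/-- Harnack-type inequality for shifts by at most one. -/
lemma F_le_shift {u : ℝ} (hu : |u| ≤ 1) (x : ℝ) :
    mix f (ker 0) x ≤ exp 130 * wt f x * mix f (ker 0) (x - u) := by
  have hF := F_pos hf x
  have hF' := F_pos hf (x - u)
  set y := -u * sc f x with hy
  have hu2 : u ^ 2 ≤ 1 := by rw [← sq_abs]; nlinarith [abs_nonneg u]
  have b0 : BddKer (ker 0) := ker_bdd (by norm_num)
  have bs : BddKer (fun z => ker 0 (z - u)) := by
    obtain ⟨hc, B, hB⟩ := b0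
    exact ⟨by fun_prop, B, fun z => hB _⟩
  have key : ∀ z, (exp (y - u ^ 2 / 2) * (1 - y)) * ker 0 z + (-(exp (y - u ^ 2 / 2) * u)) * k1 z
      ≤ ker 0 (z - u) := by
    intro z
    have hz : gaussPdf 1 (z - u) = gaussPdf 1 z * exp (-(-u * z) - (-u) ^ 2 / 2) := by
      rw [← gaussPdf_add, sub_eq_add_neg]
    rw [ker_zero, hz, k1]
    have h := Real.add_one_le_exp (u * z - y)
    have e : exp (-(-u * z) - (-u) ^ 2 / 2) = exp (u * z - y) * exp (y - u ^ 2 / 2) := by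
      rw [← exp_add]; congr 1; ring
    rw [e]
    have := mul_le_mul_of_nonneg_right h
      (mul_pos (exp_pos (y - u ^ 2 / 2)) (gaussPdf_pos z)).le
    linarith
  have h1 := mix_mono hf ((b0.const_mul _).add (k1_bdd.const_mul _)) bs key x
  rw [mix_add hf (b0.const_mul _) (k1_bdd.const_mul _), mix_const_mul, mix_const_mul] at h1
  have e1 : mix f (fun z => ker 0 (z - u)) x = mix f (ker 0) (x - u) := by
    rw [sub_eq_add_neg, mix_shift]; simp only [sub_eq_add_neg]
  have e2 : mix f k1 x = sc f x * mix f (ker 0) x := by rw [sc]; field_simp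
  rw [e1, e2] at h1
  have h2 : exp (y - u ^ 2 / 2) * mix f (ker 0) x ≤ mix f (ker 0) (x - u) := by
    refine le_trans (le_of_eq ?_) h1
    rw [hy]; ring
  have h3 : mix f (ker 0) x ≤ exp (u ^ 2 / 2 - y) * mix f (ker 0) (x - u) := by
    have := mul_le_mul_of_nonneg_left h2 (exp_pos (u ^ 2 / 2 - y)).le
    rw [← mul_assoc, ← exp_add] at this
    simpa using this
  refine h3.trans (mul_le_mul_of_nonneg_right ?_ hF'.le)
  calc exp (u ^ 2 / 2 - y) ≤ exp (2 + |sc f x|) := by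
        rw [exp_le_exp]
        have : |y| ≤ |sc f x| := by
          rw [hy, abs_mul, abs_neg]; exact mul_le_of_le_one_left (abs_nonneg _) hu
        linarith [neg_abs_le y]
    _ = exp 2 * exp |sc f x| := exp_add _ _
    _ ≤ exp 2 * (exp 128 * wt f x) := by gcongr; exact exp_abs_sc_le hf x
    _ = exp 130 * wt f x := by rw [← mul_assoc, ← exp_add]; norm_num

lemma mix_ker_one_shift_le {u : ℝ} (hu : |u| ≤ 1) (x : ℝ) :
    mix f (ker 1) (x - u) ≤ exp 200 * mix f (ker 2) x := by
  have hu2 : u ^ 2 ≤ 1 := by rw [← sq_abs]; nlinarith [abs_nonneg u]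
  have bs : BddKer (fun z => ker 1 (z - u)) := by
    obtain ⟨hc, B, hB⟩ := ker_bdd (by norm_num : 1 ≤ 64)
    exact ⟨by fun_prop, B, fun z => hB _⟩
  have key : ∀ z, ker 1 (z - u) ≤ exp 200 * ker 2 z := by
    intro z
    have hz : gaussPdf 1 (z - u) = gaussPdf 1 z * exp (-(-u * z) - (-u) ^ 2 / 2) := by
      rw [← gaussPdf_add, sub_eq_add_neg]
    rw [ker, ker, hz, mul_comm (gaussPdf 1 z), ← mul_assoc, ← mul_assoc, ← exp_add, ← exp_add]
    refine mul_le_mul_of_nonneg_right (exp_le_exp.2 ?_) (gaussPdf_pos z).le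
    push_cast
    have : |u * z| ≤ |z| := by rw [abs_mul]; exact mul_le_of_le_one_left (abs_nonneg _) hu
    have := abs_le.1 this
    nlinarith [sq_nonneg (|z| - 300), sq_abs z]
  have h1 := mix_mono hf bs ((ker_bdd (by norm_num : 2 ≤ 64)).const_mul _) key x
  rw [mix_const_mul] at h1
  refine le_trans (le_of_eq ?_) h1
  rw [sub_eq_add_neg, mix_shift]; simp only [sub_eq_add_neg]

lemma postExp_shift_le {u : ℝ} (hu : |u| ≤ 1) (x : ℝ) :
    postExp f (x - u) ≤ exp 330 * wt f x ^ 3 := by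
  have h1 := mix_ker_one_shift_le hf hu x
  have h2 := mix_ker_le hf (by norm_num : 2 ≤ 64) x
  have h3 := F_le_shift hf hu x
  have hQ := wt_pos hf x
  rw [postExp, div_le_iff₀ (F_pos hf _)]
  calc mix f (ker 1) (x - u) ≤ exp 200 * (wt f x ^ 2 * (exp 130 * wt f x * mix f (ker 0) (x - u))) :=
        h1.trans (by gcongr; exact h2.trans (by gcongr))
    _ = (exp 200 * exp 130) * wt f x ^ 3 * mix f (ker 0) (x - u) := by ring
    _ = _ := by rw [← exp_add]; norm_num

lemma wt_integrable {k : ℕ} (hk : k ≤ 64) : Integrable (fun x => wt f x ^ k * mix f (ker 0) x) := by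
  have hQ := wt_continuous hf
  have hF := F_continuous hf
  refine Integrable.mono' (mix_integrable_total hf (ker_integrable le_rfl)) 
    (by fun_prop) (Filter.Eventually.of_forall fun x => ?_)
  have hF0 := F_pos hf x
  have h1 := one_le_wt hf x
  rw [Real.norm_of_nonneg (by positivity)]
  have e : mix f (ker 64) x = wt f x ^ 64 * mix f (ker 0) x := by rw [wt_pow hf]; field_simp
  rw [e]
  gcongr

lemma integral_wt_le {k : ℕ} (hk : k ≤ 64) :
    ∫ x, wt f x ^ k * mix f (ker 0) x ≤ ∫ z, ker 64 z := by
  rw [← integral_mix hf (ker_integrable le_rfl)]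
  refine integral_mono (wt_integrable hf hk) (mix_integrable_total hf (ker_integrable le_rfl))
    fun x => ?_
  have hF0 := F_pos hf x
  have h1 := one_le_wt hf x
  have e : mix f (ker 64) x = wt f x ^ 64 * mix f (ker 0) x := by rw [wt_pow hf]; field_simp
  simp only [e]
  gcongr

end weight

/-! ### Integrated bounds in terms of the Fisher information -/

/-- The Fisher information of the `1`-smoothed density. -/
def fi (f : ℝ → ℝ) : ℝ := ∫ x, sc f x ^ 2 * mix f (ker 0) x

/-- The universal bound on the moments of `wt`. -/
def momC : ℝ := ∫ z, ker 64 z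

lemma one_le_momC : 1 ≤ momC := by
  rw [momC, ← integral_gaussPdf, ← ker_zero]
  exact integral_mono (ker_integrable (by norm_num)) (ker_integrable le_rfl) (ker_mono (by norm_num))

lemma kernel_integrable {K : ℝ → ℝ} {B : ℝ} (hc : Continuous K)
    (h : ∀ z, |K z| ≤ B * ker 1 z) : Integrable K :=
  Integrable.mono' ((ker_integrable (by norm_num : 1 ≤ 64)).const_mul B) hc.aestronglyMeasurable
    (Filter.Eventually.of_forall h)

lemma k1_integrable : Integrable k1 := kernel_integrable k1_bdd.1 fun z => (k_bounds z).1
lemma k2_integrable : Integrable k2 := kernel_integrable k2_bdd.1 fun z => (k_bounds z).2.1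

lemma integral_k1 : ∫ z, k1 z = 0 :=
  integral_eq_zero_of_hasDerivAt_of_integrable gaussPdf_hasDerivAt k1_integrable
    (ker_zero ▸ ker_integrable (by norm_num))

lemma integral_k2 : ∫ z, k2 z = 0 :=
  integral_eq_zero_of_hasDerivAt_of_integrable k1_hasDerivAt k2_integrable k1_integrable

/-- First-order Taylor expansion with a (non-optimal) quadratic remainder. -/
lemma taylor_one {h h' h'' : ℝ → ℝ} (h1 : ∀ x, HasDerivAt h (h' x) x)
    (h2 : ∀ x, HasDerivAt h' (h'' x) x) {a b B : ℝ} (hB : ∀ ξ ∈ Set.uIcc a b, |h'' ξ| ≤ B) :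
    |h b - h a - (b - a) * h' a| ≤ B * (b - a) ^ 2 := by
  have e1 : ∀ ξ ∈ Set.uIcc a b, |h' ξ - h' a| ≤ B * |b - a| := by
    intro ξ hξ
    have := (convex_uIcc a b).norm_image_sub_le_of_norm_hasDerivWithin_le
      (fun x hx => (h2 x).hasDerivWithinAt) hB Set.left_mem_uIcc hξ
    refine this.trans ?_
    have hB0 : 0 ≤ B := (abs_nonneg _).trans (hB a Set.left_mem_uIcc)
    gcongr
    exact Set.abs_sub_left_of_mem_uIcc hξ
  have := (convex_uIcc a b).norm_image_sub_le_of_norm_hasDerivWithin_le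
    (f := fun x => h x - (x - a) * h' a) (f' := fun x => h' x - h' a) (C := B * |b - a|)
    (fun x hx => ((h1 x).sub (by simpa using ((hasDerivAt_id x).sub_const a).mul_const (h' a))).hasDerivWithinAt)
    e1 Set.left_mem_uIcc Set.right_mem_uIcc
  simp only [Real.norm_eq_abs, sub_self, zero_mul, sub_zero] at this
  calc _ = |h b - (b - a) * h' a - h a| := by congr 1; ring
    _ ≤ _ := this
    _ = _ := by rw [mul_assoc, ← sq, sq_abs]

/-- The difference quotient of the score. -/
def pq (f : ℝ → ℝ) (b x : ℝ) : ℝ := (sc f x - sc f (x - b)) / b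

section info
variable {f : ℝ → ℝ} (hf : IsDensity f)
include hf

lemma integral_F : ∫ x, mix f (ker 0) x = 1 := by
  rw [integral_mix hf (ker_integrable (by norm_num)), ker_zero, integral_gaussPdf]

lemma F_integrable : Integrable (mix f (ker 0)) := mix_integrable_total hf (ker_integrable (by norm_num))

lemma integrable_of_le {h : ℝ → ℝ} (hc : Continuous h) {B : ℝ} {k : ℕ} (hk : k ≤ 64)
    (hle : ∀ x, |h x| ≤ B * wt f x ^ k) : Integrable (fun x => h x * mix f (ker 0) x) := by
  have hF := F_continuous hf
  refine Integrable.mono' ((wt_integrable hf hk).const_mul B) (by fun_prop)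
    (Filter.Eventually.of_forall fun x => ?_)
  rw [norm_mul, Real.norm_eq_abs, Real.norm_of_nonneg (F_pos hf x).le, ← mul_assoc]
  exact mul_le_mul_of_nonneg_right (hle x) (F_pos hf x).le

lemma sc_le_wt (x : ℝ) : |sc f x| ≤ 600000 * wt f x ^ 1 := by
  rw [pow_one]
  exact (abs_sc_le hf x).trans (by gcongr; exact postExp_le hf x)

lemma sc_sq_le_wt (x : ℝ) : sc f x ^ 2 ≤ 512 * wt f x := by
  have h1 := sc_sq_le hf x
  have h2 := (exp_postSq_le hf x).trans (postExp_le hf x)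
  have h3 := Real.add_one_le_exp (postSq f x / 512)
  linarith

lemma sc_sq_integrable : Integrable (fun x => sc f x ^ 2 * mix f (ker 0) x) := by
  have hs := sc_continuous hf
  refine integrable_of_le hf (by fun_prop) (by norm_num : 1 ≤ 64) (B := 512) fun x => ?_
  rw [abs_of_nonneg (sq_nonneg _), pow_one]
  exact sc_sq_le_wt hf x

lemma sc_integrable : Integrable (fun x => sc f x * mix f (ker 0) x) :=
  integrable_of_le hf (sc_continuous hf) (by norm_num) (sc_le_wt hf)

omit hf in
lemma sc_mul (hf : IsDensity f) (x : ℝ) : sc f x * mix f (ker 0) x = mix f k1 x := by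
  have := F_pos hf x
  rw [sc]; field_simp

lemma integral_sc : ∫ x, sc f x * mix f (ker 0) x = 0 := by
  simp_rw [sc_mul hf]
  rw [integral_mix hf k1_integrable, integral_k1]

lemma fi_nonneg : 0 ≤ fi f := integral_nonneg fun x => mul_nonneg (sq_nonneg _) (F_pos hf x).le

lemma fi_le_one : fi f ≤ 1 := by
  have h : ∀ x, sc f x ^ 2 * mix f (ker 0) x ≤ mix f k2 x + mix f (ker 0) x := by
    intro x
    have hF := F_pos hf x
    have e : mix f k2 x + mix f (ker 0) x = postSq f x * mix f (ker 0) x := by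
      rw [postSq]; field_simp
    rw [e]
    exact mul_le_mul_of_nonneg_right (sc_sq_le hf x) hF.le
  have h2 := mix_integrable_total hf k2_integrable
  calc fi f ≤ ∫ x, (mix f k2 x + mix f (ker 0) x) :=
        integral_mono (sc_sq_integrable hf) (h2.add (F_integrable hf)) h
    _ = 1 := by
        rw [integral_add h2 (F_integrable hf), integral_F hf, integral_mix hf k2_integrable,
          integral_k2, zero_add]

lemma abs_sc_wt_integrable {k : ℕ} (hk : k ≤ 32) :
    Integrable (fun x => |sc f x| * wt f x ^ k * mix f (ker 0) x) := by
  have hs := sc_continuous hf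
  have hw := wt_continuous hf
  refine integrable_of_le hf (h := fun x => |sc f x| * wt f x ^ k) (by fun_prop)
    (by omega : 1 + k ≤ 64) (B := 600000) fun x => ?_
  have := wt_pos hf x
  rw [abs_mul, abs_abs, abs_of_pos (pow_pos this k), pow_add, ← mul_assoc]
  exact mul_le_mul_of_nonneg_right (sc_le_wt hf x) (by positivity)

/-- The Cauchy–Schwarz inequality against a moment of `wt`. -/
lemma integral_abs_sc_wt_le {k : ℕ} (hk : k ≤ 32) (hI : 0 < fi f) :
    ∫ x, |sc f x| * wt f x ^ k * mix f (ker 0) x ≤ momC * √(fi f) := by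
  set t := √(fi f) with ht
  have ht0 : 0 < t := Real.sqrt_pos.2 hI
  have htt : t * t = fi f := Real.mul_self_sqrt hI.le
  have hw := wt_integrable hf (by omega : 2 * k ≤ 64)
  have h1 : ∀ x, |sc f x| * wt f x ^ k * mix f (ker 0) x ≤
      (1 / (2 * t)) * (sc f x ^ 2 * mix f (ker 0) x) + (t / 2) * (wt f x ^ (2 * k) * mix f (ker 0) x) := by
    intro x
    have hF := F_pos hf x
    have : |sc f x| * wt f x ^ k ≤ (1 / (2 * t)) * sc f x ^ 2 + (t / 2) * wt f x ^ (2 * k) := by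
      have h := sq_nonneg (|sc f x| - t * wt f x ^ k)
      have e : (1 / (2 * t)) * sc f x ^ 2 + (t / 2) * wt f x ^ (2 * k) - |sc f x| * wt f x ^ k
          = (|sc f x| - t * wt f x ^ k) ^ 2 / (2 * t) := by
        rw [← sq_abs (sc f x)]; field_simp; ring
      have : 0 ≤ (|sc f x| - t * wt f x ^ k) ^ 2 / (2 * t) := by positivity
      linarith
    calc _ ≤ _ := mul_le_mul_of_nonneg_right this hF.le
      _ = _ := by ring
  calc _ ≤ ∫ x, ((1 / (2 * t)) * (sc f x ^ 2 * mix f (ker 0) x)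
            + (t / 2) * (wt f x ^ (2 * k) * mix f (ker 0) x)) :=
        integral_mono (abs_sc_wt_integrable hf hk)
          (((sc_sq_integrable hf).const_mul _).add (hw.const_mul _)) h1
    _ = (1 / (2 * t)) * fi f + (t / 2) * ∫ x, wt f x ^ (2 * k) * mix f (ker 0) x := by
        rw [integral_add ((sc_sq_integrable hf).const_mul _) (hw.const_mul _), integral_const_mul,
          integral_const_mul, fi]
    _ ≤ (1 / (2 * t)) * fi f + (t / 2) * momC := by
        gcongr; exact integral_wt_le hf (by omega)
    _ ≤ momC * t := by
        rw [← htt]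
        have := one_le_momC
        have e : 1 / (2 * t) * (t * t) = t / 2 := by field_simp
        rw [e]; nlinarith

lemma abs_integral_le_of_le {h : ℝ → ℝ} {B : ℝ} {k : ℕ} (hk : k ≤ 32)
    (hB : 0 ≤ B) (hI : 0 < fi f)
    (hle : ∀ x, |h x| ≤ B * (|sc f x| * wt f x ^ k)) :
    |∫ x, h x * mix f (ker 0) x| ≤ B * (momC * √(fi f)) := by
  have hi := (abs_sc_wt_integrable hf hk).const_mul B
  calc _ ≤ ∫ x, B * (|sc f x| * wt f x ^ k * mix f (ker 0) x) := by
        rw [← Real.norm_eq_abs]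
        refine norm_integral_le_of_norm_le hi (Filter.Eventually.of_forall fun x => ?_)
        rw [norm_mul, Real.norm_eq_abs, Real.norm_of_nonneg (F_pos hf x).le, ← mul_assoc]
        exact mul_le_mul_of_nonneg_right (hle x) (F_pos hf x).le
    _ = B * ∫ x, |sc f x| * wt f x ^ k * mix f (ker 0) x := integral_const_mul _ _
    _ ≤ _ := by gcongr; exact integral_abs_sc_wt_le hf hk hI

lemma cube_exp_le (x : ℝ) :
    |sc f x| ^ 3 * exp |sc f x| ≤ 512 * exp 128 * (|sc f x| * wt f x ^ 2) := by
  have h1 := sc_sq_le_wt hf x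
  have h2 := exp_abs_sc_le hf x
  have hw := wt_pos hf x
  calc |sc f x| ^ 3 * exp |sc f x| = |sc f x| * (sc f x ^ 2 * exp |sc f x|) := by
        rw [← sq_abs]; ring
    _ ≤ |sc f x| * ((512 * wt f x) * (exp 128 * wt f x)) := by gcongr
    _ = _ := by ring

lemma cube_exp_integrable : Integrable (fun x => |sc f x| ^ 3 * exp |sc f x| * mix f (ker 0) x) := by
  have hs := sc_continuous hf
  refine integrable_of_le hf (h := fun x => |sc f x| ^ 3 * exp |sc f x|) (by fun_prop)
    (by norm_num : 3 ≤ 64) (B := 512 * exp 128 * 600000) fun x => ?_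
  rw [abs_of_nonneg (by positivity)]
  have hw := wt_pos hf x
  refine (cube_exp_le hf x).trans ?_
  rw [mul_assoc (512 * exp 128)]
  refine mul_le_mul_of_nonneg_left ?_ (by positivity)
  have := mul_le_mul_of_nonneg_right (sc_le_wt hf x) (pow_nonneg hw.le 2)
  calc _ ≤ _ := this
    _ = _ := by ring

lemma integral_cube_exp_le (hI : 0 < fi f) :
    ∫ x, |sc f x| ^ 3 * exp |sc f x| * mix f (ker 0) x ≤ 512 * exp 128 * (momC * √(fi f)) := by
  have hs := sc_continuous hf
  refine (le_abs_self _).trans (abs_integral_le_of_le hf (by norm_num : 2 ≤ 32)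
    (by positivity) hI fun x => ?_)
  rw [abs_of_nonneg (by positivity)]
  exact cube_exp_le hf x

lemma exp_sc_integrable : Integrable (fun x => exp |sc f x| * mix f (ker 0) x) := by
  have hs := sc_continuous hf
  refine integrable_of_le hf (h := fun x => exp |sc f x|) (by fun_prop)
    (by norm_num : 1 ≤ 64) (B := exp 128) fun x => ?_
  rw [abs_of_nonneg (by positivity), pow_one]
  exact exp_abs_sc_le hf x

lemma F_taylor {b : ℝ} (hb : 0 ≤ b) (hb1 : b ≤ 1) (x : ℝ) :
    |mix f (ker 0) (x + b) - mix f (ker 0) x - b * mix f k1 x| ≤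
      600000 * exp 200 * wt f x ^ 2 * mix f (ker 0) x * b ^ 2 := by
  have h := taylor_one (F_hasDerivAt hf) (fun x => mix_hasDerivAt hf k1_bdd k2_bdd k1_hasDerivAt x)
    (a := x) (b := x + b) (B := 600000 * exp 200 * wt f x ^ 2 * mix f (ker 0) x) ?_
  · simpa using h
  intro ξ hξ
  rw [Set.uIcc_of_le (by linarith)] at hξ
  have h1 := mix_abs_le hf ((ker_bdd (by norm_num : 1 ≤ 64)).const_mul 600000)
    (fun z => (k_bounds z).2.1) ξ
  rw [mix_const_mul] at h1
  have h2 := mix_ker_one_shift_le hf (u := x - ξ)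
    (by rw [abs_le]; constructor <;> linarith [hξ.1, hξ.2]) x
  rw [sub_sub_cancel] at h2
  have h3 := mix_ker_le hf (by norm_num : 2 ≤ 64) x
  calc _ ≤ _ := h1
    _ ≤ 600000 * (exp 200 * (wt f x ^ 2 * mix f (ker 0) x)) := by
        gcongr; exact h2.trans (by gcongr)
    _ = _ := by ring

/-- The drift of the shifted score: its mean is `b I` up to second order. -/
lemma integral_sc_shift (hI : 0 < fi f) {b : ℝ} (hb : 0 ≤ b) (hb1 : b ≤ 1) :
    Integrable (fun x => sc f (x - b) * mix f (ker 0) x) ∧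
    b * fi f - 600000 * exp 200 * (momC * √(fi f)) * b ^ 2 ≤
      ∫ x, sc f (x - b) * mix f (ker 0) x := by
  set c := 600000 * exp 200 with hc
  have hs := sc_continuous hf
  have hF := F_continuous hf
  have hG : Continuous (mix f k1) := mix_continuous hf k1_bdd
  have hT : ∀ x, |sc f x * (mix f (ker 0) (x + b) - mix f (ker 0) x - b * mix f k1 x)| ≤
      c * b ^ 2 * (|sc f x| * wt f x ^ 2 * mix f (ker 0) x) := by
    intro x
    rw [abs_mul]
    calc _ ≤ |sc f x| * (c * wt f x ^ 2 * mix f (ker 0) x * b ^ 2) := by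
          gcongr; exact F_taylor hf hb hb1 x
      _ = _ := by ring
  have hi := (abs_sc_wt_integrable hf (by norm_num : 2 ≤ 32)).const_mul (c * b ^ 2)
  have hTi : Integrable (fun x =>
      sc f x * (mix f (ker 0) (x + b) - mix f (ker 0) x - b * mix f k1 x)) := by
    refine Integrable.mono' hi ?_ (Filter.Eventually.of_forall hT)
    exact (hs.mul (((hF.comp (by fun_prop)).sub hF).sub (continuous_const.mul hG))).aestronglyMeasurable
  have hsq : ∀ x, sc f x * (b * mix f k1 x) = b * (sc f x ^ 2 * mix f (ker 0) x) := by
    intro x; rw [← sc_mul hf]; ring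
  have e : ∀ x, sc f x * mix f (ker 0) (x + b) =
      sc f x * (mix f (ker 0) (x + b) - mix f (ker 0) x - b * mix f k1 x) +
      (sc f x * mix f (ker 0) x + b * (sc f x ^ 2 * mix f (ker 0) x)) := by
    intro x; rw [← hsq]; ring
  have hsi : Integrable (fun x => sc f x * mix f (ker 0) x + b * (sc f x ^ 2 * mix f (ker 0) x)) :=
    (sc_integrable hf).add ((sc_sq_integrable hf).const_mul b)
  have hint : Integrable (fun x => sc f x * mix f (ker 0) (x + b)) := by
    simp_rw [e]; exact hTi.add hsi
  have hval : ∫ x, sc f x * mix f (ker 0) (x + b) =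
      (∫ x, sc f x * (mix f (ker 0) (x + b) - mix f (ker 0) x - b * mix f k1 x)) + b * fi f := by
    simp_rw [e]
    rw [integral_add hTi hsi, integral_add (sc_integrable hf) ((sc_sq_integrable hf).const_mul b),
      integral_sc hf, integral_const_mul, zero_add, fi]
  have hle : |∫ x, sc f x * (mix f (ker 0) (x + b) - mix f (ker 0) x - b * mix f k1 x)| ≤
      c * b ^ 2 * (momC * √(fi f)) := by
    calc _ ≤ ∫ x, c * b ^ 2 * (|sc f x| * wt f x ^ 2 * mix f (ker 0) x) := by
          rw [← Real.norm_eq_abs]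
          exact norm_integral_le_of_norm_le hi (Filter.Eventually.of_forall hT)
      _ = c * b ^ 2 * ∫ x, |sc f x| * wt f x ^ 2 * mix f (ker 0) x := integral_const_mul _ _
      _ ≤ _ := by gcongr; exact integral_abs_sc_wt_le hf (by norm_num) hI
  have e2 : ∀ x, sc f (x - b) * mix f (ker 0) x =
      (fun y => sc f y * mix f (ker 0) (y + b)) (x - b) := by intro x; simp
  rw [funext e2]
  refine ⟨hint.comp_sub_right b, ?_⟩
  rw [integral_sub_right_eq_self (fun y => sc f y * mix f (ker 0) (y + b)) b, hval]
  have := (abs_le.1 hle).1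
  linarith

lemma postExp_shift_le' {b ξ x : ℝ} (hb1 : b ≤ 1) (hξ : ξ ∈ Set.uIcc x (x - b)) (hb : 0 ≤ b) :
    postExp f ξ ≤ exp 330 * wt f x ^ 3 := by
  rw [Set.uIcc_of_ge (by linarith)] at hξ
  have := postExp_shift_le hf (u := x - ξ) (by rw [abs_le]; constructor <;> linarith [hξ.1, hξ.2]) x
  rwa [sub_sub_cancel] at this

lemma pq_sub_le {b : ℝ} (hb : 0 < b) (hb1 : b ≤ 1) (x : ℝ) :
    |pq f b x - sc1 f x| ≤ 10 ^ 19 * exp 990 * wt f x ^ 9 * b := by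
  have h := taylor_one (sc_hasDerivAt hf) (sc1_hasDerivAt hf) (a := x) (b := x - b)
    (B := 10 ^ 19 * exp 990 * wt f x ^ 9) ?_
  · have e : sc f (x - b) - sc f x - (x - b - x) * sc1 f x = -b * (pq f b x - sc1 f x) := by
      rw [pq]; field_simp; ring
    rw [e, abs_mul, abs_neg, abs_of_pos hb] at h
    have e2 : (x - b - x) ^ 2 = b * b := by ring
    rw [e2] at h
    have : b * |pq f b x - sc1 f x| ≤ b * (10 ^ 19 * exp 990 * wt f x ^ 9 * b) := by linarith
    exact le_of_mul_le_mul_left this hb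
  intro ξ hξ
  have h1 := postExp_shift_le' hf hb1 hξ hb.le
  have h0 := one_le_postExp hf ξ
  calc _ ≤ _ := abs_sc2_le hf ξ
    _ ≤ 10 ^ 19 * (exp 330 * wt f x ^ 3) ^ 3 := by gcongr
    _ = _ := by rw [mul_pow, ← exp_nat_mul, ← pow_mul]; norm_num; ring

lemma exp_pq_le {b : ℝ} (hb : 0 < b) (hb1 : b ≤ 1) (x : ℝ) :
    exp (|pq f b x| / 512) ≤ exp 331 * wt f x ^ 3 := by
  have hw := wt_pos hf x
  set A := exp 330 * wt f x ^ 3 with hA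
  have hA0 : 0 < A := by positivity
  have key : ∀ ξ ∈ Set.uIcc x (x - b), |sc1 f ξ| ≤ 1 + 512 * log A := by
    intro ξ hξ
    refine (abs_sc1_le hf ξ).trans ?_
    have h1 := (exp_postSq_le hf ξ).trans (postExp_shift_le' hf hb1 hξ hb.le)
    have := (Real.le_log_iff_exp_le hA0).2 h1
    linarith
  have h := (convex_uIcc x (x - b)).norm_image_sub_le_of_norm_hasDerivWithin_le
    (fun y hy => (sc_hasDerivAt hf y).hasDerivWithinAt) key Set.left_mem_uIcc Set.right_mem_uIcc
  have hp : |pq f b x| ≤ 1 + 512 * log A := by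
    rw [pq, abs_div, abs_of_pos hb, div_le_iff₀ hb, abs_sub_comm]
    simpa [abs_of_pos hb] using h
  calc exp (|pq f b x| / 512) ≤ exp (1 / 512 + log A) := exp_le_exp.2 (by linarith)
    _ = exp (1 / 512) * A := by rw [exp_add, exp_log hA0]
    _ ≤ exp 1 * A := by gcongr; norm_num
    _ = _ := by rw [hA, ← mul_assoc, ← exp_add]; norm_num

lemma pq_continuous (b : ℝ) : Continuous (pq f b) := by
  have := sc_continuous hf
  unfold pq; fun_prop

lemma abs_pq_le {b : ℝ} (hb : 0 < b) (hb1 : b ≤ 1) (x : ℝ) :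
    |pq f b x| ≤ 512 * (exp 331 * wt f x ^ 3) := by
  have h1 := exp_pq_le hf hb hb1 x
  have h2 := Real.add_one_le_exp (|pq f b x| / 512)
  linarith

lemma integral_pq_le {b : ℝ} (hI : 0 < fi f) (hb : 0 < b) (hb1 : b ≤ 1) :
    ∫ x, pq f b x * mix f (ker 0) x ≤ -fi f + 600000 * exp 200 * (momC * √(fi f)) * b := by
  obtain ⟨hi, h⟩ := integral_sc_shift hf hI hb.le hb1
  have e : ∀ x, pq f b x * mix f (ker 0) x =
      (sc f x * mix f (ker 0) x - sc f (x - b) * mix f (ker 0) x) / b := by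
    intro x; rw [pq]; ring
  simp_rw [e]
  rw [integral_div, integral_sub (sc_integrable hf) hi, integral_sc hf, div_le_iff₀ hb]
  linarith

/-- Integration by parts bounds the second moment of the derivative of the score. -/
lemma integral_sc1_sq_le (hI : 0 < fi f) :
    Integrable (fun x => sc1 f x ^ 2 * mix f (ker 0) x) ∧
    ∫ x, sc1 f x ^ 2 * mix f (ker 0) x ≤ 2 * 10 ^ 19 * (momC * √(fi f)) := by
  have hs := sc_continuous hf
  have hs1 := sc1_continuous hf
  have hs2 := sc2_continuous hf
  have hP : ∀ x, |sc2 f x| ≤ 10 ^ 19 * wt f x ^ 3 := fun x =>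
    (abs_sc2_le hf x).trans (by
      have := one_le_postExp hf x
      gcongr; exact postExp_le hf x)
  have hP1 : ∀ x, |sc1 f x| ≤ 10 ^ 12 * wt f x ^ 2 := fun x =>
    (abs_sc1_le' hf x).trans (by
      have := one_le_postExp hf x
      gcongr; exact postExp_le hf x)
  have hP0 := sc_le_wt hf
  have hi : Integrable (fun x => sc1 f x ^ 2 * mix f (ker 0) x) := by
    refine integrable_of_le hf (h := fun x => sc1 f x ^ 2) (by fun_prop) (by norm_num : 4 ≤ 64)
      (B := 10 ^ 24) fun x => ?_
    rw [abs_pow]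
    calc _ ≤ (10 ^ 12 * wt f x ^ 2) ^ 2 := by gcongr; exact hP1 x
      _ = _ := by ring
  refine ⟨hi, ?_⟩
  have hi2 : Integrable (fun x => sc1 f x * sc f x ^ 2 * mix f (ker 0) x) := by
    refine integrable_of_le hf (h := fun x => sc1 f x * sc f x ^ 2) (by fun_prop) (by norm_num : 4 ≤ 64)
      (B := 10 ^ 12 * 600000 ^ 2) fun x => ?_
    rw [abs_mul, abs_pow]
    have hw := wt_pos hf x
    calc _ ≤ (10 ^ 12 * wt f x ^ 2) * (600000 * wt f x ^ 1) ^ 2 := by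
          gcongr
          · exact hP1 x
          · exact hP0 x
      _ = _ := by ring
  have hi3 : Integrable (fun x => sc2 f x * sc f x * mix f (ker 0) x) := by
    refine integrable_of_le hf (h := fun x => sc2 f x * sc f x) (by fun_prop) (by norm_num : 4 ≤ 64)
      (B := 10 ^ 19 * 600000) fun x => ?_
    rw [abs_mul]
    have hw := wt_pos hf x
    calc _ ≤ (10 ^ 19 * wt f x ^ 3) * (600000 * wt f x ^ 1) := by
          gcongr
          · exact hP x
          · exact hP0 x
      _ = _ := by ring
  have hi4 : Integrable (fun x => sc1 f x * sc f x * mix f (ker 0) x) := by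
    refine integrable_of_le hf (h := fun x => sc1 f x * sc f x) (by fun_prop) (by norm_num : 3 ≤ 64)
      (B := 10 ^ 12 * 600000) fun x => ?_
    rw [abs_mul]
    have hw := wt_pos hf x
    calc _ ≤ (10 ^ 12 * wt f x ^ 2) * (600000 * wt f x ^ 1) := by
          gcongr
          · exact hP1 x
          · exact hP0 x
      _ = _ := by ring
  have hv : ∀ x, HasDerivAt (fun x => sc f x * mix f (ker 0) x)
      (sc1 f x * mix f (ker 0) x + sc f x ^ 2 * mix f (ker 0) x) x := by
    intro x
    have := (sc_hasDerivAt hf x).mul (F_hasDerivAt hf x)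
    rw [← sc_mul hf] at this
    convert! this using 1; ring
  have hparts := integral_mul_deriv_eq_deriv_mul_of_integrable (fun x _ => sc1_hasDerivAt hf x)
    (fun x _ => hv x)
    (by
      refine (hi.add hi2).congr (Filter.Eventually.of_forall fun x => ?_)
      simp only [Pi.add_apply, Pi.mul_apply]; ring)
    (hi3.congr (Filter.Eventually.of_forall fun x => by simp only [Pi.mul_apply]; ring))
    (hi4.congr (Filter.Eventually.of_forall fun x => by simp only [Pi.mul_apply]; ring))
  have e1 : ∫ x, sc1 f x * (sc1 f x * mix f (ker 0) x + sc f x ^ 2 * mix f (ker 0) x) =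
      (∫ x, sc1 f x ^ 2 * mix f (ker 0) x) + ∫ x, sc1 f x * sc f x ^ 2 * mix f (ker 0) x := by
    rw [← integral_add hi hi2]; congr 1; ext x; ring
  have e2 : ∫ x, sc2 f x * (sc f x * mix f (ker 0) x) = ∫ x, sc2 f x * sc f x * mix f (ker 0) x := by
    congr 1; ext x; ring
  rw [e1, e2] at hparts
  have b1 := abs_integral_le_of_le hf (h := fun x => sc1 f x * sc f x ^ 2)
    (by norm_num : 3 ≤ 32) (B := 10 ^ 19) (by positivity) hI fun x => by
      rw [abs_mul, abs_pow]
      have hw := wt_pos hf x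
      calc _ = |sc f x| * (|sc1 f x| * |sc f x|) := by ring
        _ ≤ |sc f x| * ((10 ^ 12 * wt f x ^ 2) * (600000 * wt f x ^ 1)) := by
          gcongr
          · exact hP1 x
          · exact hP0 x
        _ = 10 ^ 12 * 600000 * (|sc f x| * wt f x ^ 3) := by ring
        _ ≤ _ := by gcongr; norm_num
  have b2 := abs_integral_le_of_le hf (h := fun x => sc2 f x * sc f x)
    (by norm_num : 3 ≤ 32) (B := 10 ^ 19) (by positivity) hI fun x => by
      rw [abs_mul]
      calc _ = |sc f x| * |sc2 f x| := by ring
        _ ≤ |sc f x| * (10 ^ 19 * wt f x ^ 3) := by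
          gcongr; exact hP x
        _ = _ := by ring
  linarith [(abs_le.1 b1).1, (abs_le.1 b2).1]

/-- A universal constant for the moment bounds of the difference quotient. -/
def pqC : ℝ := 10 ^ 45 * exp 1980 * momC

lemma integral_pq_sq_le (hI : 0 < fi f) {b : ℝ} (hb : 0 < b) (hb1 : b ≤ 1) (hbI : b ^ 2 ≤ 4 * √(fi f)) :
    ∫ x, pq f b x ^ 2 * mix f (ker 0) x ≤ pqC * √(fi f) := by
  obtain ⟨hi, h⟩ := integral_sc1_sq_le hf hI
  have hp := pq_continuous hf b
  set B := 10 ^ 19 * exp 990 with hB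
  have hw := wt_integrable hf (by norm_num : 18 ≤ 64)
  have hm := one_le_momC
  have hIs : 0 ≤ √(fi f) := Real.sqrt_nonneg _
  have hi0 : Integrable (fun x => pq f b x ^ 2 * mix f (ker 0) x) := by
    refine integrable_of_le hf (h := fun x => pq f b x ^ 2) (by fun_prop) (by norm_num : 6 ≤ 64)
      (B := (512 * exp 331) ^ 2) fun x => ?_
    rw [abs_pow]
    calc _ ≤ (512 * (exp 331 * wt f x ^ 3)) ^ 2 := by gcongr; exact abs_pq_le hf hb hb1 x
      _ = _ := by ring
  calc _ ≤ ∫ x, (2 * (sc1 f x ^ 2 * mix f (ker 0) x) +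
          2 * B ^ 2 * b ^ 2 * (wt f x ^ 18 * mix f (ker 0) x)) := by
        refine integral_mono hi0 ((hi.const_mul _).add (hw.const_mul _)) fun x => ?_
        have hF := F_pos hf x
        have h1 : (pq f b x - sc1 f x) ^ 2 ≤ (B * wt f x ^ 9 * b) ^ 2 := by
          rw [← sq_abs]; gcongr; exact pq_sub_le hf hb hb1 x
        have h2 : pq f b x ^ 2 ≤ 2 * sc1 f x ^ 2 + 2 * B ^ 2 * b ^ 2 * wt f x ^ 18 := by
          have e : (B * wt f x ^ 9 * b) ^ 2 = B ^ 2 * b ^ 2 * wt f x ^ 18 := by ring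
          rw [e] at h1
          nlinarith [sq_nonneg (pq f b x - 2 * sc1 f x)]
        calc _ ≤ _ := mul_le_mul_of_nonneg_right h2 hF.le
          _ = _ := by ring
    _ = 2 * (∫ x, sc1 f x ^ 2 * mix f (ker 0) x) +
          2 * B ^ 2 * b ^ 2 * ∫ x, wt f x ^ 18 * mix f (ker 0) x := by
        rw [integral_add (hi.const_mul _) (hw.const_mul _), integral_const_mul, integral_const_mul]
    _ ≤ 2 * (2 * 10 ^ 19 * (momC * √(fi f))) + 2 * B ^ 2 * (4 * √(fi f)) * momC := by
        have q1 : ∫ x, wt f x ^ 18 * mix f (ker 0) x ≤ momC := integral_wt_le hf (by norm_num)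
        refine add_le_add (by linarith) ((mul_le_mul_of_nonneg_left q1 (by positivity)).trans ?_)
        exact mul_le_mul_of_nonneg_right (mul_le_mul_of_nonneg_left hbI (by positivity)) (by linarith)
    _ = (4 * 10 ^ 19 + 8 * B ^ 2) * (momC * √(fi f)) := by ring
    _ ≤ (10 ^ 45 * exp 1980) * (momC * √(fi f)) := by
        refine mul_le_mul_of_nonneg_right ?_ (by positivity)
        have e : B ^ 2 = 10 ^ 38 * exp 1980 := by
          rw [hB, mul_pow, ← exp_nat_mul]; norm_num
        rw [e]
        have : 1 ≤ exp 1980 := Real.one_le_exp (by norm_num)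
        generalize exp 1980 = E at this ⊢
        norm_num; linarith
    _ = _ := by rw [pqC]; ring

omit hf in
lemma exp_le_quad (y : ℝ) : exp y ≤ 1 + y + y ^ 2 * exp |y| := by
  have h := taylor_one Real.hasDerivAt_exp Real.hasDerivAt_exp (a := 0) (b := y) (B := exp |y|)
    fun ξ hξ => by
      rw [abs_of_pos (exp_pos _), exp_le_exp]
      have := Set.abs_sub_left_of_mem_uIcc hξ
      simp only [sub_zero] at this
      exact (le_abs_self ξ).trans this
  simp only [exp_zero, sub_zero, mul_one] at h
  linarith [le_abs_self (exp y - 1 - y)]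

/-- Exponential moment of the difference quotient, with a variance proxy that vanishes with the
Fisher information. -/
lemma integral_exp_pq_le (hI : 0 < fi f) {b θ : ℝ} (hb : 0 < b) (hb1 : b ≤ 1)
    (hbI : b ^ 2 ≤ 4 * √(fi f)) (hθ : 0 ≤ θ) (hθ1 : θ ≤ 1 / 1024) :
    Integrable (fun x => exp (θ * pq f b x) * mix f (ker 0) x) ∧
    ∫ x, exp (θ * pq f b x) * mix f (ker 0) x ≤
      1 + θ * (-fi f + pqC * √(fi f) * b) + pqC * θ ^ 2 * √(√(fi f)) := by
  have hp := pq_continuous hf b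
  have hm := one_le_momC
  set J := √(√(fi f)) with hJ
  have hJ0 : 0 < J := Real.sqrt_pos.2 (Real.sqrt_pos.2 hI)
  have hJJ : J * J = √(fi f) := Real.mul_self_sqrt (Real.sqrt_nonneg _)
  have hE : ∀ x c, 0 ≤ c → c ≤ 1 / 512 → exp (c * |pq f b x|) ≤ exp 331 * wt f x ^ 3 := by
    intro x c hc hc1
    refine le_trans (exp_le_exp.2 ?_) (exp_pq_le hf hb hb1 x)
    have := abs_nonneg (pq f b x)
    nlinarith
  have hi1 : Integrable (fun x => exp (θ * pq f b x) * mix f (ker 0) x) := by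
    refine integrable_of_le hf (h := fun x => exp (θ * pq f b x)) (by fun_prop) (by norm_num : 3 ≤ 64)
      (B := exp 331) fun x => ?_
    rw [abs_of_pos (exp_pos _)]
    refine le_trans (exp_le_exp.2 ?_) (hE x θ hθ (by linarith))
    exact mul_le_mul_of_nonneg_left (le_abs_self _) hθ
  refine ⟨hi1, ?_⟩
  have hi0 : Integrable (fun x => pq f b x ^ 2 * mix f (ker 0) x) := by
    refine integrable_of_le hf (h := fun x => pq f b x ^ 2) (by fun_prop) (by norm_num : 6 ≤ 64)
      (B := (512 * exp 331) ^ 2) fun x => ?_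
    rw [abs_pow]
    calc _ ≤ (512 * (exp 331 * wt f x ^ 3)) ^ 2 := by gcongr; exact abs_pq_le hf hb hb1 x
      _ = _ := by ring
  have hip : Integrable (fun x => pq f b x * mix f (ker 0) x) := by
    refine integrable_of_le hf hp (by norm_num : 3 ≤ 64) (B := 512 * exp 331) fun x => ?_
    have := abs_pq_le hf hb hb1 x
    linarith
  have hw := wt_integrable hf (by norm_num : 9 ≤ 64)
  -- `2 a b ≤ a² / J + J b²` splits off the part that involves the exponential
  have hpt : ∀ x, exp (θ * pq f b x) * mix f (ker 0) x ≤
      mix f (ker 0) x + θ * (pq f b x * mix f (ker 0) x) +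
      (θ ^ 2 * (1 / (2 * J)) * (pq f b x ^ 2 * mix f (ker 0) x)
       + θ ^ 2 * (J / 2) * (512 ^ 2 * exp 993) * (wt f x ^ 9 * mix f (ker 0) x)) := by
    intro x
    have hF := F_pos hf x
    set p := pq f b x
    have h1 := exp_le_quad (θ * p)
    have h2 : exp |θ * p| ^ 2 ≤ exp 331 * wt f x ^ 3 := by
      rw [← exp_nat_mul, abs_mul, abs_of_nonneg hθ]
      have := hE x (2 * θ) (by linarith) (by linarith)
      rw [mul_assoc] at this
      exact_mod_cast this
    have h3 : p ^ 2 ≤ (512 * (exp 331 * wt f x ^ 3)) ^ 2 := by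
      rw [← sq_abs]; gcongr; exact abs_pq_le hf hb hb1 x
    have hw0 := wt_pos hf x
    have h4 : p ^ 2 * exp |θ * p| ^ 2 ≤ 512 ^ 2 * exp 993 * wt f x ^ 9 := by
      calc _ ≤ (512 * (exp 331 * wt f x ^ 3)) ^ 2 * (exp 331 * wt f x ^ 3) := by gcongr
        _ = 512 ^ 2 * (exp 331 ^ 3) * wt f x ^ 9 := by ring
        _ = _ := by rw [← exp_nat_mul]; norm_num
    have h5 : p ^ 2 * exp |θ * p| ≤ 1 / (2 * J) * p ^ 2 + J / 2 * (p ^ 2 * exp |θ * p| ^ 2) := by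
      have e : 1 / (2 * J) * p ^ 2 + J / 2 * (p ^ 2 * exp |θ * p| ^ 2) - p ^ 2 * exp |θ * p|
          = p ^ 2 * (1 - J * exp |θ * p|) ^ 2 / (2 * J) := by field_simp; ring
      have : 0 ≤ p ^ 2 * (1 - J * exp |θ * p|) ^ 2 / (2 * J) := by positivity
      linarith
    have h6 : p ^ 2 * exp |θ * p| ≤ 1 / (2 * J) * p ^ 2 + J / 2 * (512 ^ 2 * exp 993 * wt f x ^ 9) :=
      h5.trans (by gcongr)
    have h7 : exp (θ * p) ≤ 1 + θ * p + θ ^ 2 * (1 / (2 * J) * p ^ 2 + J / 2 * (512 ^ 2 * exp 993 * wt f x ^ 9)) := by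
      refine h1.trans ?_
      have := mul_le_mul_of_nonneg_left h6 (sq_nonneg θ)
      linarith
    calc _ ≤ _ := mul_le_mul_of_nonneg_right h7 hF.le
      _ = _ := by ring
  have ia := (F_integrable hf).add (hip.const_mul θ)
  have ib := (hi0.const_mul (θ ^ 2 * (1 / (2 * J)))).add
    (hw.const_mul (θ ^ 2 * (J / 2) * (512 ^ 2 * exp 993)))
  have hmain := integral_mono hi1 (ia.add ib) hpt
  have eval : ∫ x, (mix f (ker 0) x + θ * (pq f b x * mix f (ker 0) x) +
      (θ ^ 2 * (1 / (2 * J)) * (pq f b x ^ 2 * mix f (ker 0) x)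
       + θ ^ 2 * (J / 2) * (512 ^ 2 * exp 993) * (wt f x ^ 9 * mix f (ker 0) x)))
      = 1 + θ * (∫ x, pq f b x * mix f (ker 0) x) + (θ ^ 2 * (1 / (2 * J)) * (∫ x, pq f b x ^ 2 * mix f (ker 0) x)
       + θ ^ 2 * (J / 2) * (512 ^ 2 * exp 993) * ∫ x, wt f x ^ 9 * mix f (ker 0) x) := by
    refine (integral_add ia ib).trans ?_
    congr 1
    · exact (integral_add (F_integrable hf) (hip.const_mul θ)).trans
        (by rw [integral_F hf, integral_const_mul])
    · exact (integral_add (hi0.const_mul _) (hw.const_mul _)).trans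
        (by rw [integral_const_mul, integral_const_mul])
  refine hmain.trans (eval.le.trans ?_)
  have g1 := integral_pq_le hf hI hb hb1
  have g2 := integral_pq_sq_le hf hI hb hb1 hbI
  have g3 := integral_wt_le hf (by norm_num : 9 ≤ 64)
  change _ ≤ momC at g3
  have hc1 : (1:ℝ) ≤ exp 1780 := Real.one_le_exp (by norm_num)
  have hc2 : (1:ℝ) ≤ exp 987 := Real.one_le_exp (by norm_num)
  have c1 : 600000 * exp 200 * momC ≤ pqC := by
    rw [pqC]
    gcongr <;> norm_num
  have c2 : 512 ^ 2 * exp 993 * momC ≤ pqC := by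
    rw [pqC]
    gcongr <;> norm_num
  have g1' : θ * (∫ x, pq f b x * mix f (ker 0) x) ≤ θ * (-fi f + pqC * √(fi f) * b) := by
    gcongr
    refine g1.trans ?_
    have : 600000 * exp 200 * momC * (√(fi f) * b) ≤ pqC * (√(fi f) * b) := by gcongr
    linarith
  have g2' : θ ^ 2 * (1 / (2 * J)) * (∫ x, pq f b x ^ 2 * mix f (ker 0) x) ≤ θ ^ 2 * (pqC * J / 2) := by
    rw [mul_assoc]
    gcongr
    calc _ ≤ 1 / (2 * J) * (pqC * (J * J)) := by rw [hJJ]; gcongr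
      _ = _ := by field_simp
  have g3' : θ ^ 2 * (J / 2) * (512 ^ 2 * exp 993) * ∫ x, wt f x ^ 9 * mix f (ker 0) x ≤
      θ ^ 2 * (pqC * J / 2) := by
    calc _ ≤ θ ^ 2 * (J / 2) * (512 ^ 2 * exp 993) * momC := by gcongr
      _ = θ ^ 2 * (J / 2) * (512 ^ 2 * exp 993 * momC) := by ring
      _ ≤ θ ^ 2 * (J / 2) * pqC := by gcongr
      _ = _ := by ring
  linarith

end info

/-! ### A smoothing inequality for tail probabilities -/

/-- Pointwise comparison behind the smoothing inequality: a narrow Gaussian weight `exp (-1000 v²)`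
sees the one-sided exponential `exp (-v)`, cut off at `-1/10`, essentially in full. -/
lemma smoothing_pointwise {A S : ℝ} (h : A ≤ S) :
    (189 / 200) * √(π / 1000) ≤
      ∫ z in Set.Ici (A - 1 / 10), exp (S - z) * exp (-1000 * (z - S) ^ 2) := by
  have i0 : Integrable (fun v : ℝ => exp (-1000 * v ^ 2)) := integrable_exp_neg_mul_sq (by norm_num)
  have i1 : Integrable (fun v : ℝ => v * exp (-1000 * v ^ 2)) :=
    integrable_mul_exp_neg_mul_sq (by norm_num)
  have i2 : Integrable (fun v : ℝ => v ^ 2 * exp (-1000 * v ^ 2)) := by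
    have := integrable_rpow_mul_exp_neg_mul_sq (b := 1000) (by norm_num) (s := 2) (by norm_num)
    simpa using this
  have hP : ∫ v : ℝ, (1 - v - 110 * v ^ 2) * exp (-1000 * v ^ 2) = (189 / 200) * √(π / 1000) := by
    have hd : ∀ v : ℝ, HasDerivAt (fun v : ℝ => (1 / 2000 + 11 / 200 * v) * exp (-1000 * v ^ 2))
        (11 / 200 * exp (-1000 * v ^ 2) - v * exp (-1000 * v ^ 2)
          - 110 * (v ^ 2 * exp (-1000 * v ^ 2))) v := by
      intro v
      have h1 : HasDerivAt (fun v : ℝ => -1000 * v ^ 2) (-2000 * v) v := by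
        have := (hasDerivAt_pow 2 v).const_mul (-1000)
        convert! this using 1; norm_num; ring
      have h2 : HasDerivAt (fun v : ℝ => 1 / 2000 + 11 / 200 * v) (11 / 200) v := by
        simpa using ((hasDerivAt_id v).const_mul (11 / 200)).const_add (1 / 2000)
      have := h2.mul h1.exp
      convert! this using 1; ring
    have iD : Integrable (fun v : ℝ => 11 / 200 * exp (-1000 * v ^ 2) - v * exp (-1000 * v ^ 2)
          - 110 * (v ^ 2 * exp (-1000 * v ^ 2))) := ((i0.const_mul _).sub i1).sub (i2.const_mul _)
    have h0 := integral_eq_zero_of_hasDerivAt_of_integrable hd iD (by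
      have := (i0.const_mul (1 / 2000)).add (i1.const_mul (11 / 200))
      refine this.congr (Filter.Eventually.of_forall fun v => ?_)
      simp only [Pi.add_apply]; ring)
    have e : ∀ v : ℝ, (1 - v - 110 * v ^ 2) * exp (-1000 * v ^ 2) =
        (189 / 200) * exp (-1000 * v ^ 2) + (11 / 200 * exp (-1000 * v ^ 2) - v * exp (-1000 * v ^ 2)
          - 110 * (v ^ 2 * exp (-1000 * v ^ 2))) := fun v => by ring
    simp_rw [e]
    rw [integral_add (i0.const_mul _) iD, h0, add_zero, integral_const_mul, integral_gaussian]
  have iE : Integrable (fun v : ℝ => exp (-v) * exp (-1000 * v ^ 2)) := by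
    refine Integrable.mono' ((integrable_exp_neg_mul_sq (b := 1) (by norm_num)).const_mul (exp 1))
      (by fun_prop) (Filter.Eventually.of_forall fun v => ?_)
    rw [Real.norm_of_nonneg (by positivity), ← exp_add, ← exp_add, exp_le_exp]
    nlinarith [sq_nonneg (v + 1)]
  have iS : Integrable (fun z : ℝ => exp (S - z) * exp (-1000 * (z - S) ^ 2)) := by
    have := iE.comp_sub_right S
    simpa using this
  rw [← hP, ← integral_sub_right_eq_self _ S, ← integral_indicator measurableSet_Ici]
  have iP : Integrable (fun v : ℝ => (1 - v - 110 * v ^ 2) * exp (-1000 * v ^ 2)) := by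
    refine ((i0.sub i1).sub (i2.const_mul 110)).congr (Filter.Eventually.of_forall fun v => ?_)
    simp only [Pi.sub_apply]; ring
  refine integral_mono (iP.comp_sub_right S) (iS.indicator measurableSet_Ici) fun z => ?_
  by_cases hz : z ∈ Set.Ici (A - 1 / 10)
  · simp only [Set.indicator_of_mem hz]
    refine mul_le_mul_of_nonneg_right ?_ (exp_pos _).le
    have := Real.add_one_le_exp (S - z)
    nlinarith [sq_nonneg (z - S)]
  · simp only [Set.indicator_of_notMem hz]
    refine mul_nonpos_of_nonpos_of_nonneg ?_ (exp_pos _).le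
    simp only [Set.mem_Ici, not_le] at hz
    nlinarith

lemma gauss_fourier (y : ℝ) : ((exp (-1000 * y ^ 2) : ℝ) : ℂ) =
    ((1 / √(4000 * π) : ℝ) : ℂ) *
      ∫ u : ℝ, Complex.exp (Complex.I * y * u) * Complex.exp (-(1 / 4000 : ℂ) * u ^ 2) := by
  rw [fourierIntegral_gaussian (b := 1 / 4000) (by norm_num)]
  have e : ((π : ℂ) / (1 / 4000)) ^ (1 / 2 : ℂ) = ((√(4000 * π) : ℝ) : ℂ) := by
    rw [Real.sqrt_eq_rpow, Complex.ofReal_cpow (by positivity)]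
    push_cast; congr 1; ring
  rw [e, ← mul_assoc, ← Complex.ofReal_mul, one_div, inv_mul_cancel₀ (by positivity),
    Complex.ofReal_one, one_mul]
  push_cast; congr 1; ring

section smoothing
variable {Ω : Type*} [MeasurableSpace Ω] {μ : Measure Ω} [IsProbabilityMeasure μ] {S : Ω → ℝ}
  (hS : Measurable S) (hint : Integrable (fun x => exp (S x)) μ)
include hS hint

/-- Fourier inversion of the narrow Gaussian weight, under the exponential tilt by `S`. -/
lemma tilted_density_le {G : ℝ → ℝ} {K : ℝ} (hG : Integrable G)
    (hle : ∀ u : ℝ, ‖∫ x, Complex.exp ((1 - Complex.I * u) * S x) ∂μ‖ * exp (-(1 / 4000) * u ^ 2) ≤ G u)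
    (hK : ∫ u, G u ≤ K) (z : ℝ) :
    ∫ x, exp (S x) * exp (-1000 * (z - S x) ^ 2) ∂μ ≤ 1 / √(4000 * π) * K := by
  set c : ℝ := 1 / √(4000 * π) with hc
  have hc0 : 0 ≤ c := by positivity
  have hprod : Integrable (Function.uncurry fun (x : Ω) (u : ℝ) =>
      Complex.exp ((1 - Complex.I * u) * S x) *
        (Complex.exp (Complex.I * z * u) * Complex.exp (-(1 / 4000 : ℂ) * u ^ 2)))
      (μ.prod volume) := by
    have h := hint.mul_prod (ν := volume) (integrable_exp_neg_mul_sq (b := 1 / 4000) (by norm_num))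
    refine h.mono ?_ (Filter.Eventually.of_forall fun ⟨x, u⟩ => ?_)
    · have : Measurable (Function.uncurry fun (x : Ω) (u : ℝ) =>
        Complex.exp ((1 - Complex.I * u) * S x) *
        (Complex.exp (Complex.I * z * u) * Complex.exp (-(1 / 4000 : ℂ) * u ^ 2))) := by
        unfold Function.uncurry
        fun_prop
      exact this.aestronglyMeasurable
    · simp only [Function.uncurry, norm_mul, Complex.norm_exp]
      rw [Real.norm_of_nonneg (exp_pos _).le, Real.norm_of_nonneg (exp_pos _).le]
      refine le_of_eq ?_
      have e : (-(1 / 4000 : ℂ) * u ^ 2) = ((-(1 / 4000) * u ^ 2 : ℝ) : ℂ) := by push_cast; ring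
      rw [e, Complex.ofReal_re]
      simp
  have e1 : ((∫ x, exp (S x) * exp (-1000 * (z - S x) ^ 2) ∂μ : ℝ) : ℂ) =
      c * ∫ u : ℝ, ∫ x, Complex.exp ((1 - Complex.I * u) * S x) *
        (Complex.exp (Complex.I * z * u) * Complex.exp (-(1 / 4000 : ℂ) * u ^ 2)) ∂μ := by
    rw [← integral_integral_swap hprod, ← integral_const_mul, ← integral_complex_ofReal]
    congr 1; ext x
    rw [Complex.ofReal_mul, gauss_fourier, mul_left_comm, ← integral_const_mul]
    congr 2; ext u
    rw [Complex.ofReal_exp, ← Complex.exp_add, ← Complex.exp_add, ← Complex.exp_add,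
      ← Complex.exp_add]
    congr 1; push_cast; ring
  have e2 : ‖((∫ x, exp (S x) * exp (-1000 * (z - S x) ^ 2) ∂μ : ℝ) : ℂ)‖ ≤ c * K := by
    rw [e1, norm_mul, Complex.norm_real, Real.norm_of_nonneg hc0]
    refine mul_le_mul_of_nonneg_left (le_trans ?_ hK) hc0
    refine norm_integral_le_of_norm_le hG (Filter.Eventually.of_forall fun u => ?_)
    rw [integral_mul_const, norm_mul, norm_mul]
    refine le_trans (le_of_eq ?_) (hle u)
    have e : (-(1 / 4000 : ℂ) * u ^ 2) = ((-(1 / 4000) * u ^ 2 : ℝ) : ℂ) := by push_cast; ring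
    rw [e, Complex.norm_exp, Complex.norm_exp, Complex.ofReal_re]
    simp
  rw [Complex.norm_real] at e2
  exact (le_abs_self _).trans e2

/-- Esseen-type tail bound: the characteristic function of the tilted law controls the tail, without
the loss of a constant factor that Markov's inequality would incur. -/
lemma tail_le_of_tilted {G : ℝ → ℝ} {K : ℝ} (hG : Integrable G)
    (hle : ∀ u : ℝ, ‖∫ x, Complex.exp ((1 - Complex.I * u) * S x) ∂μ‖ * exp (-(1 / 4000) * u ^ 2) ≤ G u)
    (hK : ∫ u, G u ≤ K) (A : ℝ) :
    μ {x | A ≤ S x} ≤ ENNReal.ofReal (exp (1 / 10 - A) * (K / (189 / 100 * π))) := by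
  have hD := tilted_density_le hS hint hG hle hK
  have hDnn : ∀ z, 0 ≤ ∫ x, exp (S x) * exp (-1000 * (z - S x) ^ 2) ∂μ := fun z =>
    integral_nonneg fun x => by positivity
  set c : ℝ := 1 / √(4000 * π) with hc
  set d : ℝ := (189 / 200) * √(π / 1000) with hd
  have hd0 : 0 < d := by positivity
  have hcK : 0 ≤ c * K := (hDnn 0).trans (hD 0)
  have hDi : ∀ z, Integrable (fun x => exp (S x) * exp (-1000 * (z - S x) ^ 2)) μ := by
    intro z
    refine hint.mono (by fun_prop) (Filter.Eventually.of_forall fun x => ?_)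
    rw [norm_mul]
    refine mul_le_of_le_one_right (norm_nonneg _) ?_
    rw [Real.norm_of_nonneg (exp_pos _).le, exp_le_one_iff]
    nlinarith [sq_nonneg (z - S x)]
  have h1 : ENNReal.ofReal d * μ {x | A ≤ S x} ≤
      ∫⁻ x, (∫⁻ z in Set.Ici (A - 1 / 10),
        ENNReal.ofReal (exp (S x - z) * exp (-1000 * (z - S x) ^ 2))) ∂μ := by
    rw [← setLIntegral_const]
    refine (setLIntegral_mono' (measurableSet_le measurable_const hS) fun x hx => ?_).trans
      (setLIntegral_le_lintegral _ _)
    rw [← ofReal_integral_eq_lintegral_ofReal _ (Filter.Eventually.of_forall fun z => by positivity)]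
    · exact ENNReal.ofReal_le_ofReal (smoothing_pointwise hx)
    · refine Integrable.integrableOn ?_
      by_contra hni
      have hpos := smoothing_pointwise (le_refl (S x))
      refine Integrable.mono' (((integrable_exp_neg_mul_sq (b := 1) (by norm_num)).const_mul
        (exp 1)).comp_sub_right (S x)) (f := fun z => exp (S x - z) * exp (-1000 * (z - S x) ^ 2))
        (by fun_prop) (Filter.Eventually.of_forall fun v => ?_) |> hni
      rw [Real.norm_of_nonneg (by positivity), ← exp_add, ← exp_add, exp_le_exp]
      nlinarith [sq_nonneg (v - S x + 1)]
  have h2 : ∫⁻ x, (∫⁻ z in Set.Ici (A - 1 / 10),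
        ENNReal.ofReal (exp (S x - z) * exp (-1000 * (z - S x) ^ 2))) ∂μ ≤
      ENNReal.ofReal (exp (1 / 10 - A) * (c * K)) := by
    rw [lintegral_lintegral_swap]
    · have h3 : ∀ z, ∫⁻ x, ENNReal.ofReal (exp (S x - z) * exp (-1000 * (z - S x) ^ 2)) ∂μ ≤
          ENNReal.ofReal (exp (-z) * (c * K)) := by
        intro z
        have e : ∀ x, exp (S x - z) * exp (-1000 * (z - S x) ^ 2) =
            exp (-z) * (exp (S x) * exp (-1000 * (z - S x) ^ 2)) := by
          intro x; rw [← exp_add, ← exp_add, ← exp_add]; congr 1; ring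
        simp_rw [e]
        rw [← ofReal_integral_eq_lintegral_ofReal ((hDi z).const_mul _)
          (Filter.Eventually.of_forall fun z => by positivity), integral_const_mul]
        exact ENNReal.ofReal_le_ofReal (mul_le_mul_of_nonneg_left (hD z) (exp_pos _).le)
      refine (lintegral_mono h3).trans (le_of_eq ?_)
      rw [← ofReal_integral_eq_lintegral_ofReal _ (Filter.Eventually.of_forall fun z => by positivity)]
      · rw [integral_mul_const, integral_Ici_eq_integral_Ioi, integral_exp_neg_Ioi, neg_sub]
      · refine Integrable.mul_const ?_ _
        rw [← IntegrableOn, integrableOn_Ici_iff_integrableOn_Ioi]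
        exact integrableOn_exp_neg_Ioi _
    · refine Measurable.aemeasurable ?_
      unfold Function.uncurry
      fun_prop
  have h3 := h1.trans h2
  rw [mul_comm, ← ENNReal.le_div_iff_mul_le (Or.inl (by simpa using hd0)) (Or.inl ENNReal.ofReal_ne_top),
    ← ENNReal.ofReal_div_of_pos hd0] at h3
  refine h3.trans (ENNReal.ofReal_le_ofReal (le_of_eq ?_))
  rw [mul_div_assoc]
  congr 1
  have e : √(4000 * π) * √(π / 1000) = 2 * π := by
    rw [← Real.sqrt_mul (by positivity), show 4000 * π * (π / 1000) = (2 * π) ^ 2 by ring,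
      Real.sqrt_sq (by positivity)]
  have : c / d = 1 / (189 / 100 * π) := by
    rw [hc, hd, div_div, show √(4000 * π) * (189 / 200 * √(π / 1000)) =
      189 / 200 * (√(4000 * π) * √(π / 1000)) by ring, e]
    congr 1; ring
  rw [mul_comm c, mul_div_assoc, this]; ring

end smoothing

/-! ### Sharp Chernoff bound for the score at the true parameter -/

section chernoff
variable {ν : Measure ℝ} [IsProbabilityMeasure ν] {w : ℝ → ℝ} {I c t : ℝ}

/-- Second-order expansion of the complex moment generating function `E exp ((1 - iu) t w)`. -/
lemma mgf_expansion (hw : Measurable w) (hI : 0 < I)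
    (hint : Integrable (fun x => exp |w x|) ν) (h0 : ∫ x, w x ∂ν = 0) (h2 : ∫ x, w x ^ 2 ∂ν = I)
    (h3i : Integrable (fun x => |w x| ^ 3 * exp |w x|) ν)
    (h3 : ∫ x, |w x| ^ 3 * exp |w x| ∂ν ≤ c * √I) (ht : 0 < t) {u : ℝ} (hu : (1 + |u|) * t ≤ 1) :
    ‖∫ x, Complex.exp ((1 - Complex.I * u) * (t * w x : ℝ)) ∂ν
        - (1 + (1 - Complex.I * u) ^ 2 * (t ^ 2 * I / 2 : ℝ))‖ ≤
      (1 + |u|) ^ 3 * (t ^ 2 * I * (c * t / √I)) := by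
  have hwi : Integrable w ν := hint.mono' hw.aestronglyMeasurable
    (Filter.Eventually.of_forall fun x => by
      rw [Real.norm_eq_abs]; linarith [Real.add_one_le_exp |w x|])
  have hw2i : Integrable (fun x => w x ^ 2) ν := (hint.const_mul 2).mono'
    (hw.pow_const 2).aestronglyMeasurable
    (Filter.Eventually.of_forall fun x => by
      rw [Real.norm_of_nonneg (by positivity), ← sq_abs]
      nlinarith [Real.quadratic_le_exp_of_nonneg (abs_nonneg (w x)), abs_nonneg (w x)])
  set ζ : ℂ := 1 - Complex.I * u with hζ
  have hζn : ‖ζ‖ ≤ 1 + |u| := by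
    refine (norm_sub_le _ _).trans ?_
    simp
  have hzt : ∀ x, ‖ζ * (t * w x : ℝ)‖ ≤ (1 + |u|) * t * |w x| := fun x => by
    rw [norm_mul, Complex.norm_real, Real.norm_eq_abs, abs_mul, abs_of_pos ht, ← mul_assoc]
    gcongr
  have hzt1 : ∀ x, ‖ζ * (t * w x : ℝ)‖ ≤ |w x| := fun x => (hzt x).trans (by
    nlinarith [abs_nonneg (w x)])
  have hei : Integrable (fun x => Complex.exp (ζ * (t * w x : ℝ))) ν := by
    refine hint.mono' (by fun_prop) (Filter.Eventually.of_forall fun x => ?_)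
    rw [Complex.norm_exp]
    exact exp_le_exp.2 ((Complex.re_le_norm _).trans (hzt1 x))
  have e1 : ∫ x, Complex.exp (ζ * (t * w x : ℝ)) ∂ν - (1 + ζ ^ 2 * (t ^ 2 * I / 2 : ℝ)) =
      ∫ x, (Complex.exp (ζ * (t * w x : ℝ)) -
        (1 + ζ * t * (w x : ℝ) + ζ ^ 2 * t ^ 2 / 2 * (w x ^ 2 : ℝ))) ∂ν := by
    have i1 : Integrable (fun x => ζ * t * ((w x : ℝ) : ℂ)) ν := hwi.ofReal.const_mul _
    have i2 : Integrable (fun x => ζ ^ 2 * t ^ 2 / 2 * ((w x ^ 2 : ℝ) : ℂ)) ν :=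
      hw2i.ofReal.const_mul _
    have i3 : Integrable (fun x => 1 + ζ * t * ((w x : ℝ) : ℂ)) ν := (integrable_const _).add i1
    rw [integral_sub (g := fun x => 1 + ζ * t * (w x : ℝ) + ζ ^ 2 * t ^ 2 / 2 * (w x ^ 2 : ℝ)) hei
      (i3.add i2), integral_add i3 i2, integral_add (integrable_const _) i1,
      integral_const_mul, integral_const_mul, integral_complex_ofReal, integral_complex_ofReal, h0,
      h2]
    simp
    ring
  rw [e1]
  have hb : ∀ x, ‖Complex.exp (ζ * (t * w x : ℝ)) -
        (1 + ζ * t * (w x : ℝ) + ζ ^ 2 * t ^ 2 / 2 * (w x ^ 2 : ℝ))‖ ≤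
      ((1 + |u|) * t) ^ 3 * (|w x| ^ 3 * exp |w x|) := by
    intro x
    have h := Complex.norm_exp_sub_sum_le_norm_mul_exp (ζ * (t * w x : ℝ)) 3
    have e : ∑ m ∈ Finset.range 3, (ζ * (t * w x : ℝ)) ^ m / (m.factorial : ℂ) =
        (1 + ζ * t * (w x : ℝ) + ζ ^ 2 * t ^ 2 / 2 * (w x ^ 2 : ℝ)) := by
      simp [Finset.sum_range_succ, Nat.factorial]
      ring
    rw [e] at h
    refine h.trans ?_
    rw [← mul_assoc, ← mul_pow]
    gcongr
    · exact hzt x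
    · exact hzt1 x
  refine (norm_integral_le_of_norm_le (h3i.const_mul _) (Filter.Eventually.of_forall hb)).trans ?_
  rw [integral_const_mul]
  have hs : 0 < √I := sqrt_pos.2 hI
  have : (1 + |u|) ^ 3 * (t ^ 2 * I * (c * t / √I)) = ((1 + |u|) * t) ^ 3 * (c * √I) := by
    have : I = √I * √I := (mul_self_sqrt hI.le).symm
    field_simp
    rw [sq_sqrt hI.le, mul_comm]
  rw [this]
  gcongr

/-- Gaussian decay in `u` of the moment generating function along `Re = 1`. -/
lemma norm_mgf_le (hw : Measurable w) (hI : 0 < I)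
    (hint : Integrable (fun x => exp |w x|) ν) (h0 : ∫ x, w x ∂ν = 0) (h2 : ∫ x, w x ^ 2 ∂ν = I)
    (h3i : Integrable (fun x => |w x| ^ 3 * exp |w x|) ν)
    (h3 : ∫ x, |w x| ^ 3 * exp |w x| ∂ν ≤ c * √I) (ht : 0 < t) (hc : 0 ≤ c)
    (ht1 : t ≤ 1 / 1000) (hσ : t ^ 2 * I ≤ 1 / 1000000) (hβ : c * t / √I ≤ 1 / 200000)
    {u : ℝ} (hu : |u| ≤ 999) :
    ‖∫ x, Complex.exp ((1 - Complex.I * u) * (t * w x : ℝ)) ∂ν‖ ≤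
      1 + t ^ 2 * I * (1 / 2 + 4 * (c * t / √I) - 47 / 100 * u ^ 2) := by
  set β := c * t / √I with hβd
  set q := t ^ 2 * I with hq
  have hβ0 : 0 ≤ β := by positivity
  have hq0 : 0 ≤ q := by positivity
  have h := mgf_expansion hw hI hint h0 h2 h3i h3 ht (u := u) (by nlinarith)
  have hu2 : u ^ 2 ≤ 999 ^ 2 := by rw [← sq_abs]; gcongr
  have hqu : q * u ^ 2 ≤ 1 := by nlinarith [sq_nonneg u]
  have hn : ‖1 + (1 - Complex.I * u) ^ 2 * (q / 2 : ℝ)‖ ≤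
      1 + q * (1 / 2 - 49 / 100 * u ^ 2) := by
    have e : 1 + (1 - Complex.I * u) ^ 2 * (q / 2 : ℝ) =
        ((1 + q * (1 - u ^ 2) / 2 : ℝ) : ℂ) + ((-(q * u) : ℝ) : ℂ) * Complex.I := by
      push_cast
      linear_combination (q / 2 * u ^ 2 : ℂ) * Complex.I_sq
    rw [e, Complex.norm_add_mul_I]
    refine Real.sqrt_le_iff.2 ⟨by nlinarith, ?_⟩
    have : (q * u) ^ 2 ≤ q * u ^ 2 * (1 / 1000000) := by
      have : (q * u) ^ 2 = q * u ^ 2 * q := by ring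
      rw [this]; gcongr
    nlinarith [mul_nonneg hq0 (sq_nonneg u)]
  have hcub : (1 + |u|) ^ 3 * β ≤ 4 * β + 2 / 100 * u ^ 2 := by
    have h1 : (1 + |u|) ^ 3 ≤ 4 * (1 + |u| * u ^ 2) := by
      rw [← sq_abs u]
      nlinarith [abs_nonneg u, mul_nonneg (add_nonneg zero_le_one (abs_nonneg u)) (sq_nonneg (|u| - 1))]
    have h2 : |u| * β ≤ 1 / 200 := by nlinarith [abs_nonneg u]
    calc _ ≤ 4 * (1 + |u| * u ^ 2) * β := by gcongr
      _ = 4 * β + 4 * (|u| * β) * u ^ 2 := by ring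
      _ ≤ _ := by nlinarith [sq_nonneg u]
  have := norm_le_norm_add_norm_sub' (∫ x, Complex.exp ((1 - Complex.I * u) * (t * w x : ℝ)) ∂ν)
    (1 + (1 - Complex.I * u) ^ 2 * (q / 2 : ℝ))
  have h5 : (1 + |u|) ^ 3 * (q * β) ≤ q * (4 * β + 2 / 100 * u ^ 2) := by
    calc _ = q * ((1 + |u|) ^ 3 * β) := by ring
      _ ≤ _ := by gcongr
  nlinarith

/-- A Chernoff bound whose prefactor is below `1/2`: the exponential tilt is inverted by Fourier
analysis, not by Markov's inequality. -/
lemma sum_tail {n : ℕ} {L : ℝ} (hw : Measurable w) (hI : 0 < I)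
    (hint : Integrable (fun x => exp |w x|) ν) (h0 : ∫ x, w x ∂ν = 0) (h2 : ∫ x, w x ^ 2 ∂ν = I)
    (h3i : Integrable (fun x => |w x| ^ 3 * exp |w x|) ν)
    (h3 : ∫ x, |w x| ^ 3 * exp |w x| ∂ν ≤ c * √I) (ht : 0 < t) (hc : 0 ≤ c)
    (ht1 : t ≤ 1 / 1000) (hσ : t ^ 2 * I ≤ 1 / 1000000) (hβ : c * t / √I ≤ 1 / 200000)
    (hL : 1 ≤ L) (hnt : n * (t ^ 2 * I) = 2 * L) (A : ℝ) :
    Measure.pi (fun _ : Fin n => ν) {x | A ≤ t * ∑ i, w (x i)} ≤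
      ENNReal.ofReal (36 / 100 * exp (L + 8 * (c * t / √I) * L - A)) := by
  set β := c * t / √I with hβd
  set q := t ^ 2 * I with hq
  have hq0 : 0 ≤ q := by positivity
  set M := exp (L + 8 * β * L) with hM
  have hpow : ∀ u : ℝ, ∫ x : Fin n → ℝ, Complex.exp ((1 - Complex.I * u) * (t * ∑ i, w (x i) : ℝ))
      ∂(Measure.pi fun _ => ν) = (∫ x, Complex.exp ((1 - Complex.I * u) * (t * w x : ℝ)) ∂ν) ^ n := by
    intro u
    have := integral_fintype_prod_eq_pow (ι := Fin n) (μ := ν)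
      (fun x => Complex.exp ((1 - Complex.I * u) * (t * w x : ℝ)))
    rw [Fintype.card_fin] at this
    rw [← this]
    congr 1; ext x
    rw [← Complex.exp_sum]
    congr 1
    push_cast
    rw [Finset.mul_sum, Finset.mul_sum]
  have hlt : ∀ u : ℝ, |u| ≤ 999 →
      ‖∫ x : Fin n → ℝ, Complex.exp ((1 - Complex.I * u) * (t * ∑ i, w (x i) : ℝ))
      ∂(Measure.pi fun _ => ν)‖ ≤ M * exp (-(94 / 100) * u ^ 2) := by
    intro u hu
    rw [hpow, norm_pow]
    refine (pow_le_pow_left₀ (norm_nonneg _)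
      ((norm_mgf_le hw hI hint h0 h2 h3i h3 ht hc ht1 hσ hβ hu).trans
        ((add_comm _ _).trans_le (Real.add_one_le_exp _))) n).trans ?_
    rw [← exp_nat_mul, ← mul_assoc, hnt, ← exp_add, exp_le_exp]
    nlinarith [sq_nonneg u]
  have hall : ∀ u : ℝ, ‖∫ x : Fin n → ℝ, Complex.exp ((1 - Complex.I * u) * (t * ∑ i, w (x i) : ℝ))
      ∂(Measure.pi fun _ => ν)‖ ≤ M := by
    intro u
    have h00 := hlt 0 (by norm_num)
    rw [hpow, norm_pow] at h00 ⊢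
    refine le_trans (pow_le_pow_left₀ (norm_nonneg _) ?_ n) (h00.trans (by simp))
    have e : ∫ x, Complex.exp ((1 - Complex.I * (0 : ℝ)) * (t * w x : ℝ)) ∂ν =
        ((∫ x, exp (t * w x) ∂ν : ℝ) : ℂ) := by
      rw [← integral_complex_ofReal]
      congr 1; ext x; simp
    rw [e, Complex.norm_real]
    refine (norm_integral_le_integral_norm _).trans ((le_of_eq ?_).trans (le_abs_self _))
    congr 1; ext x
    rw [Complex.norm_exp]
    congr 1
    simp
  set G : ℝ → ℝ := fun u => M * (exp (-(94 / 100) * u ^ 2) + exp (-100) * exp (-(1 / 8000) * u ^ 2))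
    with hG
  have g1 := integrable_exp_neg_mul_sq (b := 94 / 100) (by norm_num)
  have g2 := (integrable_exp_neg_mul_sq (b := 1 / 8000) (by norm_num)).const_mul (exp (-100))
  have hGi : Integrable G := (g1.add g2).const_mul M
  have hGle : ∀ u : ℝ, ‖∫ x : Fin n → ℝ, Complex.exp ((1 - Complex.I * u) * (t * ∑ i, w (x i) : ℝ))
      ∂(Measure.pi fun _ => ν)‖ * exp (-(1 / 4000) * u ^ 2) ≤ G u := by
    intro u
    have hM0 : 0 < M := exp_pos _
    rcases le_or_gt |u| 999 with hu | hu
    · refine (mul_le_of_le_one_right (norm_nonneg _)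
        (exp_le_one_iff.2 (by nlinarith [sq_nonneg u]))).trans ((hlt u hu).trans ?_)
      have : 0 < exp (-100) * exp (-(1 / 8000) * u ^ 2) := by positivity
      simp only [hG]; gcongr; linarith
    · have : exp (-(1 / 4000) * u ^ 2) ≤ exp (-100) * exp (-(1 / 8000) * u ^ 2) := by
        rw [← exp_add, exp_le_exp]
        have : (999 : ℝ) ^ 2 ≤ u ^ 2 := by rw [← sq_abs u]; gcongr
        linarith
      refine (mul_le_mul (hall u) this (exp_pos _).le hM0.le).trans ?_
      have : 0 < exp (-(94 / 100) * u ^ 2) := exp_pos _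
      simp only [hG]; gcongr; linarith
  have hGint : ∫ u, G u ≤ M * (188 / 100) := by
    simp only [hG]
    rw [integral_const_mul, integral_add g1 g2, integral_const_mul, integral_gaussian,
      integral_gaussian]
    have hM0 : 0 < M := exp_pos _
    gcongr
    have a1 : √(π / (94 / 100)) ≤ 183 / 100 := by
      refine Real.sqrt_le_iff.2 ⟨by norm_num, ?_⟩
      nlinarith [Real.pi_lt_d4]
    have a2 : √(π / (1 / 8000)) ≤ 200 := by
      refine Real.sqrt_le_iff.2 ⟨by norm_num, ?_⟩
      nlinarith [Real.pi_lt_d4]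
    have a3 : exp (-100) ≤ 1 / 10000 := by
      rw [exp_neg, one_div]
      have : exp 100 = exp 10 ^ 10 := by rw [← exp_nat_mul]; norm_num
      rw [this]
      have : (11 : ℝ) ≤ exp 10 := by linarith [Real.add_one_le_exp 10]
      gcongr
      calc (10000 : ℝ) ≤ 11 ^ 10 := by norm_num
        _ ≤ _ := by gcongr
    nlinarith [Real.sqrt_nonneg (π / (1 / 8000)), exp_pos (-100)]
  have hSm : Measurable fun x : Fin n → ℝ => t * ∑ i, w (x i) := by fun_prop
  have hSi : Integrable (fun x : Fin n → ℝ => exp (t * ∑ i, w (x i))) (Measure.pi fun _ => ν) := by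
    have hi : Integrable (fun x => exp (t * w x)) ν := by
      refine hint.mono' (by fun_prop) (Filter.Eventually.of_forall fun x => ?_)
      rw [Real.norm_of_nonneg (exp_pos _).le, exp_le_exp]
      nlinarith [le_abs_self (w x), abs_nonneg (w x)]
    have := Integrable.fintype_prod (ι := Fin n) (μ := fun _ => ν) (f := fun _ x => exp (t * w x))
      (fun _ => hi)
    refine this.congr (Filter.Eventually.of_forall fun x => ?_)
    simp only [← exp_sum, Finset.mul_sum]
  refine (tail_le_of_tilted hSm hSi hGi hGle hGint A).trans (ENNReal.ofReal_le_ofReal ?_)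
  have e : exp (L + 8 * β * L - A) = M * exp (-A) := by rw [← exp_add]; rfl
  have e2 : exp (1 / 10 - A) = exp (1 / 10) * exp (-A) := by rw [← exp_add]; rfl
  have a4 : exp (1 / 10) ≤ 1106 / 1000 := by
    have h := Real.exp_bound' (x := 1 / 10) (by norm_num) (by norm_num) (n := 3) (by norm_num)
    refine h.trans ?_
    norm_num [Finset.sum_range_succ, Nat.factorial]
  have hpi : (188 / 100) / (189 / 100 * π) ≤ 317 / 1000 := by
    rw [div_le_iff₀ (by positivity)]
    linarith [Real.pi_gt_d4]
  rw [e, e2]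
  have : exp (1 / 10) * exp (-A) * (M * (188 / 100) / (189 / 100 * π)) =
    (exp (1 / 10) * ((188 / 100) / (189 / 100 * π))) * (M * exp (-A)) := by ring
  rw [this]
  have hM0 : 0 < M := exp_pos _
  gcongr
  calc _ ≤ (1106 / 1000 : ℝ) * (317 / 1000) := by gcongr
    _ ≤ _ := by norm_num
end chernoff

/-! ### The sample law and large deviations of difference quotients of the score -/

/-- The law of one observation `Y + Z`, for unit smoothing. -/
def law (f : ℝ → ℝ) : Measure ℝ :=
  volume.withDensity fun x => ENNReal.ofReal (mix f (ker 0) x)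

/-- Chernoff's bound for a sum of i.i.d. terms. -/
lemma iid_chernoff {ν : Measure ℝ} [IsProbabilityMeasure ν] {g : ℝ → ℝ} {n : ℕ} {θ κ : ℝ}
    (hθ : 0 ≤ θ) (hi : Integrable (fun x => exp (θ * g x)) ν) (hκ : ∫ x, exp (θ * g x) ∂ν ≤ exp κ)
    (a : ℝ) :
    Measure.pi (fun _ : Fin n => ν) {x | a ≤ ∑ i, g (x i)} ≤ ENNReal.ofReal (exp (n * κ - θ * a)) := by
  have e : ∀ x : Fin n → ℝ, exp (θ * ∑ i, g (x i)) = ∏ i, exp (θ * g (x i)) := fun x => by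
    rw [← exp_sum, Finset.mul_sum]
  have hSi : Integrable (fun x : Fin n → ℝ => exp (θ * ∑ i, g (x i))) (Measure.pi fun _ => ν) := by
    simp_rw [e]
    exact Integrable.fintype_prod (ι := Fin n) (μ := fun _ => ν) (f := fun _ x => exp (θ * g x))
      (fun _ => hi)
  have h := ProbabilityTheory.measure_ge_le_exp_mul_mgf a hθ hSi
  have h2 : ProbabilityTheory.mgf (fun x : Fin n → ℝ => ∑ i, g (x i)) (Measure.pi fun _ => ν) θ ≤
      exp (n * κ) := by
    rw [ProbabilityTheory.mgf]
    simp_rw [e]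
    rw [integral_fintype_prod_eq_pow (ι := Fin n) (μ := ν) (fun x => exp (θ * g x)),
      Fintype.card_fin, exp_nat_mul]
    exact pow_le_pow_left₀ (integral_nonneg fun x => (exp_pos _).le) hκ n
  rw [← ofReal_measureReal]
  refine ENNReal.ofReal_le_ofReal (h.trans ?_)
  rw [sub_eq_neg_add, exp_add, neg_mul]
  gcongr

section law
variable {f : ℝ → ℝ} (hf : IsDensity f)
include hf

lemma law_integral (g : ℝ → ℝ) : ∫ x, g x ∂(law f) = ∫ x, g x * mix f (ker 0) x := by
  rw [law, integral_withDensity_eq_integral_toReal_smul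
    (F_continuous hf).measurable.ennreal_ofReal (Filter.Eventually.of_forall fun _ => by simp)]
  congr 1; ext x
  rw [ENNReal.toReal_ofReal (F_pos hf x).le, smul_eq_mul, mul_comm]

lemma law_integrable {g : ℝ → ℝ} (h : Integrable (fun x => g x * mix f (ker 0) x)) :
    Integrable g (law f) := by
  rw [law, integrable_withDensity_iff_integrable_smul'
    (F_continuous hf).measurable.ennreal_ofReal (Filter.Eventually.of_forall fun _ => by simp)]
  refine h.congr (Filter.Eventually.of_forall fun x => ?_)
  simp only [ENNReal.toReal_ofReal (F_pos hf x).le, smul_eq_mul, mul_comm]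

lemma law_isProbabilityMeasure : IsProbabilityMeasure (law f) := by
  refine ⟨?_⟩
  rw [law, withDensity_apply _ .univ, setLIntegral_univ,
    ← ofReal_integral_eq_lintegral_ofReal (F_integrable hf)
    (Filter.Eventually.of_forall fun x => (F_pos hf x).le), integral_F hf, ENNReal.ofReal_one]

omit hf in
lemma one_le_pqC : 1 ≤ pqC := by
  rw [pqC]
  have h1 := one_le_momC
  have h2 : (1 : ℝ) ≤ exp 1980 := one_le_exp (by norm_num)
  have h3 : (1 : ℝ) ≤ 10 ^ 45 := by norm_num
  nlinarith [mul_le_mul h3 h2 zero_le_one (by positivity : (0:ℝ) ≤ 10 ^ 45)]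

/-- For a single shift `b`, the empirical curvature exceeds `-(1 - o(1)) n I` only with exponentially
small probability. -/
lemma pq_tail (hI : 0 < fi f) {b η : ℝ} (hb : 0 < b) (hb1 : b ≤ 1)
    (hbI : b ^ 2 ≤ 4 * √(fi f)) (hη : 0 ≤ η) (hη1 : η ≤ 1) (n : ℕ) :
    Measure.pi (fun _ : Fin n => law f)
        {x | n * (-fi f + pqC * √(fi f) * b + η * fi f) ≤ ∑ i, pq f b (x i)} ≤
      ENNReal.ofReal (exp (-(n * fi f ^ 2 * η ^ 2 / (4 * pqC * √(√(fi f)))))) := by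
  have := law_isProbabilityMeasure hf
  have hD := one_le_pqC
  have hI1 := fi_le_one hf
  set I := fi f
  set J := √(√I) with hJ
  have hJ0 : 0 < J := by positivity
  have hJ1 : J ≤ 1 := by
    rw [hJ, Real.sqrt_le_one, Real.sqrt_le_one]; exact hI1
  have hIJ : I ≤ J := by
    have : I = J ^ 4 := by
      rw [hJ, show (4 : ℕ) = 2 * 2 by norm_num, pow_mul, Real.sq_sqrt (by positivity),
        Real.sq_sqrt hI.le]
    rw [this]
    exact pow_le_of_le_one hJ0.le hJ1 (by norm_num)
  set θ := η * I / (2 * pqC * J) with hθ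
  have hθ0 : 0 ≤ θ := by positivity
  have hθ1 : θ ≤ 1 / 1024 := by
    rw [hθ, div_le_iff₀ (by positivity)]
    have hD' : 512 ≤ pqC := by
      rw [pqC]
      have h1 := one_le_momC
      have h2 : (1 : ℝ) ≤ exp 1980 := one_le_exp (by norm_num)
      have h3 : (512 : ℝ) ≤ 10 ^ 45 := by norm_num
      nlinarith [mul_le_mul h3 h2 zero_le_one (by positivity : (0:ℝ) ≤ 10 ^ 45)]
    have : η * I ≤ 1 * J := by gcongr
    nlinarith
  obtain ⟨hi, h⟩ := integral_exp_pq_le hf hI hb hb1 hbI hθ0 hθ1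
  refine (iid_chernoff hθ0 (law_integrable hf hi) (κ := θ * (-I + pqC * √I * b) + pqC * θ ^ 2 * J)
    ?_ _).trans (ENNReal.ofReal_le_ofReal (exp_le_exp.2 (le_of_eq ?_)))
  · rw [law_integral hf]
    refine h.trans (le_trans (le_of_eq ?_) (Real.add_one_le_exp _))
    ring
  · rw [hθ]
    field_simp
    ring

end law

/-- Absorbs the size of the grid of shifts into the exponential gain of a single shift. -/
lemma grid_arith {D L γ I J ω : ℝ} (hD : 1 ≤ D) (hI : I = J ^ 4) (hJ : 0 < J) (hJ1 : J ≤ 1)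
    (hL : 1 ≤ L) (hω1 : 2 * (8 * D) ^ 2 * L ≤ ω) (hω2 : 8 * D * γ / 50 ≤ ω)
    (hγ : 10 ^ 10 * D ^ 4 ≤ γ) :
    100 * ω ^ 2 / I * exp (-(ω / (4 * D * J))) ≤ 1 / 10 * exp (-L) := by
  have hγ0 : 0 < γ := lt_of_lt_of_le (by positivity) hγ
  have hω : 0 < ω := lt_of_lt_of_le (by positivity) hω2
  have hω0 : 1 ≤ ω := by nlinarith
  set v := ω / (4 * D * J) with hv
  have hv0 : 0 < v := by positivity
  have hωv : ω = 4 * D * J * v := by rw [hv]; field_simp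
  have hJv : 1 ≤ 4 * D * v * J := by nlinarith
  have h1 : ω ^ 2 / I ≤ (4 * D) ^ 4 * v ^ 4 := by
    rw [div_le_iff₀ (by rw [hI]; positivity), hI]
    calc ω ^ 2 = ω ^ 2 * 1 := by ring
      _ ≤ ω ^ 2 * (4 * D * v * J) ^ 2 := by gcongr; exact one_le_pow₀ hJv
      _ = (4 * D) ^ 4 * v ^ 4 * J ^ 4 := by rw [hωv]; ring
  have h2 : v ^ 4 ≤ 384 * exp (v / 2) := by
    have := Real.pow_div_factorial_le_exp (v / 2) (by positivity) 4
    norm_num [Nat.factorial] at this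
    linarith
  have hvω : ω / (4 * D) ≤ v := by
    exact div_le_div_of_nonneg_left hω.le (by positivity) (by nlinarith)
  have h3 : L + γ / 100 ≤ v / 2 := by
    have a1 : L ≤ ω / (16 * D) := by
      rw [le_div_iff₀ (by positivity)]; nlinarith
    have a2 : γ / 100 ≤ ω / (16 * D) := by
      rw [le_div_iff₀ (by positivity)]; nlinarith
    have a3 : ω / (4 * D) = 4 * (ω / (16 * D)) := by field_simp; ring
    linarith
  have h4 : 100 * ((4 * D) ^ 4 * 384) * exp (-(γ / 100)) ≤ 1 / 10 := by
    rw [exp_neg, ← div_eq_mul_inv, div_le_iff₀ (exp_pos _)]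
    have := Real.add_one_le_exp (γ / 100)
    have : 10 ^ 8 * D ^ 4 ≤ γ / 100 := by linarith
    nlinarith [pow_pos (zero_lt_one.trans_le hD) 4]
  calc 100 * ω ^ 2 / I * exp (-v) = 100 * (ω ^ 2 / I) * exp (-v) := by ring
    _ ≤ 100 * ((4 * D) ^ 4 * (384 * exp (v / 2))) * exp (-v) := by
      gcongr; exact h1.trans (by gcongr)
    _ = 100 * ((4 * D) ^ 4 * 384) * exp (-(v / 2)) := by
      rw [show -(v / 2) = v / 2 + -v by ring, exp_add]; ring
    _ ≤ 100 * ((4 * D) ^ 4 * 384) * exp (-(γ / 100) + -L) := by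
      gcongr; linarith
    _ = (100 * ((4 * D) ^ 4 * 384) * exp (-(γ / 100))) * exp (-L) := by rw [exp_add]; ring
    _ ≤ _ := by gcongr

/-! ### One-sided localisation of the roots for unit smoothing -/

/-- Third-moment constant of the score: `E |s|³ exp |s| ≤ momS · √I`. -/
def momS : ℝ := 512 * exp 128 * momC

/-- The constant in front of `1 / γ`. -/
def rateC : ℝ := 40 * pqC + 10 * momS

/-- The threshold for `γ`. -/
def gammaMin : ℝ := 10 ^ 10 * pqC ^ 4 + 200000 * momS

lemma one_le_momS : 1 ≤ momS := by
  have h1 := one_le_momC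
  have h2 : (1 : ℝ) ≤ exp 128 := one_le_exp (by norm_num)
  rw [momS]
  nlinarith

lemma omega_bounds {D L γ η ω : ℝ} (hD : 1 ≤ D) (hL : 1 ≤ L) (hγ0 : 0 < γ) (hη0 : 0 < η)
    (hγη : 8 * D ≤ γ * η) (hLη : 1 ≤ 100 * L * η) (h : 2 * L * γ ^ 2 * η ^ 2 ≤ ω) :
    2 * (8 * D) ^ 2 * L ≤ ω ∧ 8 * D * γ / 50 ≤ ω ∧ L ≤ ω ∧ 2 ≤ ω := by
  have h1 : 2 * (8 * D) ^ 2 * L ≤ ω := by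
    calc 2 * (8 * D) ^ 2 * L ≤ 2 * (γ * η) ^ 2 * L := by gcongr
      _ = 2 * L * γ ^ 2 * η ^ 2 := by ring
      _ ≤ ω := h
  have hD2 : 1 ≤ D ^ 2 := one_le_pow₀ hD
  refine ⟨h1, ?_, by nlinarith, by nlinarith⟩
  · calc 8 * D * γ / 50 ≤ γ * η * γ / 50 := by gcongr
      _ ≤ γ * η * γ / 50 * (100 * L * η) := le_mul_of_one_le_right (by positivity) hLη
      _ = 2 * L * γ ^ 2 * η ^ 2 := by ring
      _ ≤ ω := h

lemma grid_count {L γ t η I s n ω : ℝ} (hL : 1 ≤ L) (hγ0 : 0 < γ) (ht : 0 < t) (hη : 0 < η)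
    (hI : 0 < I) (hs : s ^ 2 = I) (hnt : n * (t ^ 2 * I) = 2 * L) (hω : ω = n * I ^ 2 * η ^ 2)
    (hγη : 1 ≤ γ * η) (hLη : 1 ≤ 100 * L * η) (hωL : L ≤ ω) (hω2 : 2 ≤ ω) :
    s ≤ 50 * (γ * t * η) * ω ^ 2 := by
  refine le_of_sq_le_sq ?_ (by positivity)
  have e : (50 * (γ * t * η) * ω ^ 2) ^ 2 = 5000 * (γ * η) ^ 2 * (L * η ^ 2) * I * ω ^ 3 := by
    have : t ^ 2 * ω = 2 * L * (I * η ^ 2) := by rw [← hnt, hω]; ring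
    calc _ = 2500 * (γ * η) ^ 2 * (t ^ 2 * ω) * ω ^ 3 := by ring
      _ = _ := by rw [this]; ring
  rw [e, hs]
  have h1 : 1 ≤ 10000 * (L * η ^ 2 * ω) := by
    calc (1 : ℝ) ≤ (100 * L * η) ^ 2 := one_le_pow₀ hLη
      _ = 10000 * (L * η ^ 2 * L) := by ring
      _ ≤ _ := by gcongr
  have h2 : (4 : ℝ) ≤ ω ^ 2 := by nlinarith
  calc I = I * 1 := by ring
    _ ≤ I * (1 / 2 * (10000 * (L * η ^ 2 * ω) * 4)) := by gcongr; linarith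
    _ = 5000 * 1 ^ 2 * (L * η ^ 2) * I * (ω * 4) := by ring
    _ ≤ 5000 * (γ * η) ^ 2 * (L * η ^ 2) * I * (ω * ω ^ 2) := by gcongr
    _ = _ := by ring

/-- The choice of `rateC` leaves room for both the curvature loss and the third-order error. -/
lemma level_bound {L X Y η : ℝ} (hL : 1 ≤ L) (hX : 0 < X) (hY : 0 < Y) (hX1 : X ≤ 1 / 1000)
    (hη : η = 8 * X + 1 / (100 * L)) :
    2 * L + 8 * Y * L - 1 / 25 ≤ 2 * L * ((1 + (40 * X + 10 * Y)) * (1 - 2 * X - η) - η) := by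
  set Z := 1 / (100 * L) with hZ
  have hZ1 : Z ≤ 1 / 100 := by
    rw [hZ, div_le_div_iff₀ (by positivity) (by norm_num)]; linarith
  have hLZ : L * Z = 1 / 100 := by rw [hZ]; field_simp
  have h0 : 0 ≤ (40 * X + 10 * Y) * (1 / 20 - 2 * X - η) := by
    apply mul_nonneg <;> linarith
  have h2 : 1 - 2 * Z + 4 * Y ≤ (1 + (40 * X + 10 * Y)) * (1 - 2 * X - η) - η := by
    have : (1 + (40 * X + 10 * Y)) * (1 - 2 * X - η) - η =
      (40 * X + 10 * Y) * (1 / 20 - 2 * X - η) + (40 * X + 10 * Y) * (19 / 20) + 1 - 2 * X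
        - 2 * η := by ring
    rw [this]; linarith
  calc 2 * L + 8 * Y * L - 1 / 25 = 2 * L * (1 - 2 * Z + 4 * Y) := by
        linear_combination (4 : ℝ) * hLZ
    _ ≤ _ := by gcongr

section core
variable {f : ℝ → ℝ} (hf : IsDensity f)
include hf

/-- The deterministic step. If the empirical score at `0` is not too negative, and the empirical
curvature is close to `-n I` along the grid `Δ, 2Δ, …`, then the empirical score is positive
throughout the range: the one-sided Lipschitz bound on `s` bridges the gaps of the grid. -/
lemma score_pos_of_good {n : ℕ} {x : Fin n → ℝ} {t I η Δ ρ τ a : ℝ} (hn : 0 < (n : ℝ)) (ht : 0 < t)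
    (hI : 0 < I) (hρ : 0 ≤ ρ) (hΔ : Δ = t * η * I) (hΔ0 : 0 < Δ)
    (hS : t * ∑ i, -sc f (x i) < n * (t ^ 2 * I) * ((1 + τ) * ρ - η))
    (hpq : ∑ i, pq f (⌈a / Δ⌉₊ * Δ) (x i) < -(n * I * ρ)) (ha : (1 + τ) * t < a) (ha0 : 0 < a) :
    0 < ∑ i, sc f (x i - a) := by
  set b := ⌈a / Δ⌉₊ * Δ with hb
  have hab : a ≤ b := by
    rw [hb, ← div_le_iff₀ hΔ0]; exact Nat.le_ceil _
  have hba : b ≤ a + Δ := by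
    have := Nat.ceil_lt_add_one (div_pos ha0 hΔ0).le
    calc b ≤ (a / Δ + 1) * Δ := by rw [hb]; gcongr
      _ = a + Δ := by field_simp
  have hb0 : 0 < b := ha0.trans_le hab
  have h1 : ∑ i, sc f (x i - b) - ∑ i, sc f (x i - a) ≤ n * Δ := by
    rw [← Finset.sum_sub_distrib]
    calc _ ≤ ∑ _i : Fin n, (b - a) := Finset.sum_le_sum fun i _ => sc_sub_le hf hab (x i)
      _ = n * (b - a) := by rw [Finset.sum_const, Finset.card_univ, Fintype.card_fin, nsmul_eq_mul]
      _ ≤ n * Δ := by gcongr; linarith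
  have h2 : b * ∑ i, pq f b (x i) = ∑ i, sc f (x i) - ∑ i, sc f (x i - b) := by
    rw [← Finset.sum_sub_distrib, Finset.mul_sum]
    refine Finset.sum_congr rfl fun i _ => ?_
    rw [pq]; field_simp
  have h3 : b * ∑ i, pq f b (x i) ≤ -(a * (n * I * ρ)) := by
    have : b * ∑ i, pq f b (x i) ≤ b * -(n * I * ρ) := by gcongr
    have : a * (n * I * ρ) ≤ b * (n * I * ρ) := by gcongr
    linarith
  have h4 : (1 + τ) * t * (n * I * ρ) ≤ a * (n * I * ρ) := by gcongr
  rw [Finset.sum_neg_distrib] at hS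
  have h5 : -∑ i, sc f (x i) < n * t * I * ((1 + τ) * ρ - η) := by
    refine lt_of_mul_lt_mul_left (hS.trans_le (le_of_eq ?_)) ht.le
    ring
  rw [hΔ] at h1
  nlinarith

/-- The theorem for unit smoothing and one side. The union of the bad event of `sum_tail` and of those
of `pq_tail` over the grid `Δ, 2Δ, …, NΔ` has probability at most `exp (-L) / 2`, and off it
`score_pos_of_good` applies. If `√I / γ ≤ √(2 L / (n I))` the range of `a` is empty. -/
lemma one_sided (hI : 0 < fi f) {L γ : ℝ} (hL : 1 ≤ L) (hγ : gammaMin ≤ γ) {n : ℕ} (hn : 0 < n) :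
    Measure.pi (fun _ : Fin n => law f)
        {x | ∃ a, (1 + rateC / γ) * √(2 * L / (n * fi f)) < a ∧ a ≤ √(fi f) / γ ∧
          ∑ i, sc f (x i - a) ≤ 0} ≤
      ENNReal.ofReal (exp (-L) / 2) := by
  have hprob := law_isProbabilityMeasure hf
  have hD := one_le_pqC
  have hc := one_le_momS
  have hI1 := fi_le_one hf
  have hsc := sc_continuous hf
  have hpqt := fun {b η : ℝ} => pq_tail hf hI (b := b) (η := η)
  have m0 : ∫ x, -sc f x ∂(law f) = 0 := by
    rw [law_integral hf (fun x => -sc f x)]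
    simp_rw [neg_mul]
    rw [integral_neg, integral_sc hf, neg_zero]
  have m2 : ∫ x, (-sc f x) ^ 2 ∂(law f) = fi f := by
    rw [law_integral hf (fun x => (-sc f x) ^ 2)]
    simp_rw [neg_sq]; rfl
  have m3i : Integrable (fun x => |-sc f x| ^ 3 * exp |-sc f x|) (law f) := by
    simp_rw [abs_neg]; exact law_integrable hf (cube_exp_integrable hf)
  have m3 : ∫ x, |-sc f x| ^ 3 * exp |-sc f x| ∂(law f) ≤ momS * √(fi f) := by
    simp_rw [abs_neg]
    rw [law_integral hf (fun x => |sc f x| ^ 3 * exp |sc f x|)]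
    refine (integral_cube_exp_le hf hI).trans (le_of_eq ?_)
    rw [momS]; ring
  have mei : Integrable (fun x => exp |-sc f x|) (law f) := by
    simp_rw [abs_neg]; exact law_integrable hf (exp_sc_integrable hf)
  set I := fi f
  set D := pqC
  set c := momS
  set s := √I with hs
  have hs0 : 0 < s := sqrt_pos.2 hI
  have hs1 : s ≤ 1 := sqrt_le_one.2 hI1
  have hsI : s ^ 2 = I := sq_sqrt hI.le
  have hD4 : D ≤ D ^ 4 := le_self_pow₀ hD (by norm_num)
  have hγD : 10 ^ 10 * D ≤ γ := by rw [gammaMin] at hγ; linarith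
  have hγD4 : 10 ^ 10 * D ^ 4 ≤ γ := by rw [gammaMin] at hγ; linarith
  have hγc : 200000 * c ≤ γ := by
    have : 0 < D ^ 4 := by positivity
    rw [gammaMin] at hγ; linarith
  have hγ0 : 0 < γ := by linarith
  have hγ9 : 10 ^ 10 ≤ γ := by linarith
  have hn' : 0 < (n : ℝ) := by exact_mod_cast hn
  set t := √(2 * L / (n * I)) with ht
  have ht0 : 0 < t := by positivity
  have ht2 : t ^ 2 = 2 * L / (n * I) := sq_sqrt (by positivity)
  have hnt : n * (t ^ 2 * I) = 2 * L := by rw [ht2]; field_simp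
  have hC0 : 0 < rateC := by rw [rateC]; linarith
  rcases le_or_gt (s / γ) t with htγ | htγ
  · refine le_trans (le_of_eq ?_) zero_le
    convert! measure_empty (μ := Measure.pi (fun _ : Fin n => law f))
    refine Set.eq_empty_of_forall_notMem fun x hx => ?_
    obtain ⟨a, h1, h2, -⟩ := hx
    have : t ≤ (1 + rateC / γ) * t := by
      have : 0 < rateC / γ * t := by positivity
      linarith
    linarith
  set η := 8 * D / γ + 1 / (100 * L) with hη
  have hη0 : 0 < η := by positivity
  have hDγ : D / γ ≤ 1 / (10 ^ 10) := by
    rw [div_le_div_iff₀ hγ0 (by norm_num)]; linarith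
  have hL100 : 1 / (100 * L) ≤ 1 / 100 := by
    rw [div_le_div_iff₀ (by positivity) (by norm_num)]; linarith
  have hη8 : η = 8 * (D / γ) + 1 / (100 * L) := by rw [hη]; ring
  have hη1 : η ≤ 2 / 100 := by rw [hη8]; linarith
  set Δ := t * η * I with hΔ
  have hΔ0 : 0 < Δ := by positivity
  have hΔs : Δ ≤ s / γ := by
    calc t * η * I ≤ s / γ * 1 * 1 := by gcongr; linarith
      _ = s / γ := by ring
  set N := ⌈s / γ / Δ⌉₊ with hN
  have hNΔ : N * Δ ≤ 2 * (s / γ) := by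
    have := Nat.ceil_lt_add_one (a := s / γ / Δ) (by positivity)
    calc N * Δ ≤ (s / γ / Δ + 1) * Δ := by gcongr
      _ = s / γ + Δ := by field_simp
      _ ≤ _ := by linarith
  have hsγ : 2 * (s / γ) ≤ s := by
    rw [← mul_div_assoc, div_le_iff₀ hγ0]
    have := mul_le_mul_of_nonneg_left (show (2 : ℝ) ≤ γ by linarith) hs0.le
    linarith
  set J := √s with hJ
  have hJ0 : 0 < J := by positivity
  have hJ1 : J ≤ 1 := sqrt_le_one.2 hs1
  have hJ4 : I = J ^ 4 := by
    rw [hJ, show (4 : ℕ) = 2 * 2 by norm_num, pow_mul, Real.sq_sqrt hs0.le, hsI]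
  set ω := n * I ^ 2 * η ^ 2 with hω
  have hnI : 2 * L * γ ^ 2 ≤ n * I ^ 2 := by
    have h1 : t ^ 2 * γ ^ 2 ≤ I := by
      rw [← hsI, ← mul_pow]
      have : t * γ ≤ s := by rw [← le_div_iff₀ hγ0]; exact htγ.le
      gcongr
    calc 2 * L * γ ^ 2 = n * I * (t ^ 2 * γ ^ 2) := by rw [← hnt]; ring
      _ ≤ n * I * I := by gcongr
      _ = n * I ^ 2 := by ring
  have hγη : 8 * D ≤ γ * η := by
    rw [hη]
    have : γ * (8 * D / γ + 1 / (100 * L)) = 8 * D + γ * (1 / (100 * L)) := by field_simp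
    rw [this]
    have : 0 < γ * (1 / (100 * L)) := by positivity
    linarith
  have hLη : 1 ≤ 100 * L * η := by
    have h1 : 1 / (100 * L) ≤ η := by
      rw [hη]
      have : 0 < 8 * D / γ := by positivity
      linarith
    rw [div_le_iff₀ (by positivity)] at h1
    linarith
  have hωγ : 2 * L * γ ^ 2 * η ^ 2 ≤ ω := by rw [hω]; gcongr
  obtain ⟨hω1, hω2, hωL, hω3⟩ := omega_bounds hD hL hγ0 hη0 hγη hLη hωγ
  -- The grid has at most polynomially many points in `ω`.
  have hNω : (N : ℝ) ≤ 100 * ω ^ 2 / I := by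
    have h1 : (N : ℝ) ≤ 2 * (s / γ) / Δ := by rwa [le_div_iff₀ hΔ0]
    refine h1.trans ?_
    rw [div_le_div_iff₀ hΔ0 hI, hΔ]
    have h2 : s ≤ 50 * (γ * t * η) * ω ^ 2 :=
      grid_count hL hγ0 ht0 hη0 hI hsI hnt hω (by linarith) hLη hωL hω3
    calc 2 * (s / γ) * I = 2 * I / γ * s := by ring
      _ ≤ 2 * I / γ * (50 * (γ * t * η) * ω ^ 2) := by gcongr
      _ = 100 * ω ^ 2 * (t * η * I) := by field_simp; ring
  set ρ := 1 - 2 * D / γ - η with hρ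
  set A := n * (t ^ 2 * I) * ((1 + rateC / γ) * ρ - η) with hA
  have hρ0 : 0 ≤ ρ := by
    have : 2 * D / γ = 2 * (D / γ) := by ring
    rw [hρ, this]; linarith
  have hT := sum_tail (n := n) (ν := law f) (w := fun x => -sc f x) (c := c) (t := t) (L := L)
    hsc.neg.measurable hI mei m0 m2 m3i m3 ht0 (by linarith)
    (by
      refine htγ.le.trans ?_
      rw [div_le_div_iff₀ hγ0 (by norm_num)]; linarith)
    (by
      have : t ≤ 1 / 1000 := by
        refine htγ.le.trans ?_
        rw [div_le_div_iff₀ hγ0 (by norm_num)]; linarith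
      calc t ^ 2 * I ≤ (1 / 1000) ^ 2 * 1 := by gcongr
        _ ≤ _ := by norm_num)
    (by
      rw [div_le_div_iff₀ hs0 (by norm_num)]
      have : t * γ ≤ s := by rw [← le_div_iff₀ hγ0]; exact htγ.le
      have := mul_le_mul_of_nonneg_left hγc ht0.le
      linarith)
    hL hnt A
  have hβ : c * t / s ≤ c / γ := by
    rw [div_le_div_iff₀ hs0 hγ0]
    have : t * γ ≤ s := by rw [← le_div_iff₀ hγ0]; exact htγ.le
    rw [mul_assoc]; gcongr
  have hAL : L + 8 * (c * t / s) * L - A ≤ 1 / 25 - L := by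
    have h1 : 8 * (c * t / s) * L ≤ 8 * (c / γ) * L := by gcongr
    have e2 : rateC / γ = 40 * (D / γ) + 10 * (c / γ) := by rw [rateC]; ring
    have e1 : 2 * D / γ = 2 * (D / γ) := by ring
    have := level_bound hL (X := D / γ) (Y := c / γ) (by positivity) (by positivity)
      (by linarith) hη8
    rw [hA, hnt, hρ, e1, e2]
    linarith
  have hexp : exp (1 / 25) ≤ 21 / 20 := by
    have h := Real.exp_bound' (x := 1 / 25) (by norm_num) (by norm_num) (n := 3) (by norm_num)
    refine h.trans ?_
    norm_num [Finset.sum_range_succ, Nat.factorial]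
  have hT' : 36 / 100 * exp (L + 8 * (c * t / s) * L - A) ≤ 4 / 10 * exp (-L) := by
    calc _ ≤ 36 / 100 * exp (1 / 25 - L) := by gcongr
      _ = 36 / 100 * exp (1 / 25) * exp (-L) := by rw [sub_eq_add_neg, exp_add]; ring
      _ ≤ _ := by gcongr; linarith
  have hB : ∀ k ∈ Finset.range N, Measure.pi (fun _ : Fin n => law f)
      {x | -(n * I * ρ) ≤ ∑ i, pq f ((k + 1 : ℕ) * Δ) (x i)} ≤
      ENNReal.ofReal (exp (-(ω / (4 * D * J)))) := by
    intro k hk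
    have hkN : ((k + 1 : ℕ) : ℝ) ≤ N := by exact_mod_cast Finset.mem_range.1 hk
    have hb : (k + 1 : ℕ) * Δ ≤ 2 * (s / γ) := le_trans (by gcongr) hNΔ
    have hb0 : 0 < (k + 1 : ℕ) * Δ := by positivity
    refine (measure_mono fun x hx => ?_).trans
      (hpqt hb0 (hb.trans (hsγ.trans hs1)) ?_ hη0.le (by linarith) n)
    · simp only [Set.mem_ofPred_eq] at hx ⊢
      refine le_trans ?_ hx
      rw [hρ]
      have : D * s * ((k + 1 : ℕ) * Δ) ≤ I * (2 * D / γ) := by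
        calc D * s * ((k + 1 : ℕ) * Δ) ≤ D * s * (2 * (s / γ)) := by gcongr
          _ = I * (2 * D / γ) := by rw [← hsI]; ring
      have := mul_le_mul_of_nonneg_left this hn'.le
      linarith
    · have : ((k + 1 : ℕ) * Δ) ^ 2 ≤ s ^ 2 := by gcongr; exact hb.trans hsγ
      have : s ^ 2 ≤ s * 1 := by rw [sq]; gcongr
      linarith
  have hsub : {x : Fin n → ℝ | ∃ a, (1 + rateC / γ) * t < a ∧ a ≤ s / γ ∧
        ∑ i, sc f (x i - a) ≤ 0} ⊆
      {x | A ≤ t * ∑ i, -sc f (x i)} ∪ ⋃ k ∈ Finset.range N,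
        {x | -(n * I * ρ) ≤ ∑ i, pq f ((k + 1 : ℕ) * Δ) (x i)} := by
    rintro x ⟨a, h1, h2, h3⟩
    by_contra hx
    simp only [Set.mem_union, Set.mem_ofPred_eq, Set.mem_iUnion, not_or, not_le, not_exists,
      Finset.mem_range] at hx
    have ha0 : 0 < a := lt_trans (by positivity) h1
    have hk0 : 0 < ⌈a / Δ⌉₊ := Nat.ceil_pos.2 (by positivity)
    have hkN : ⌈a / Δ⌉₊ ≤ N := Nat.ceil_mono (by gcongr)
    have := hx.2 (⌈a / Δ⌉₊ - 1) (by omega)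
    rw [Nat.sub_add_cancel hk0] at this
    exact absurd (score_pos_of_good hf hn' ht0 hI hρ0 hΔ hΔ0 hx.1 this h1 ha0) (not_lt.2 h3)
  refine (measure_mono hsub).trans ((measure_union_le _ _).trans ?_)
  have hU : Measure.pi (fun _ : Fin n => law f) (⋃ k ∈ Finset.range N,
        {x | -(n * I * ρ) ≤ ∑ i, pq f ((k + 1 : ℕ) * Δ) (x i)}) ≤
      ENNReal.ofReal (1 / 10 * exp (-L)) := by
    refine (measure_biUnion_finset_le _ _).trans ((Finset.sum_le_sum hB).trans ?_)
    rw [Finset.sum_const, Finset.card_range, nsmul_eq_mul, ← ENNReal.ofReal_natCast,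
      ← ENNReal.ofReal_mul (by positivity)]
    refine ENNReal.ofReal_le_ofReal (le_trans ?_
      (grid_arith hD hJ4 hJ0 hJ1 hL hω1 hω2 hγD4))
    gcongr
  refine (add_le_add (hT.trans (ENNReal.ofReal_le_ofReal hT')) hU).trans ?_
  rw [← ENNReal.ofReal_add (by positivity) (by positivity)]
  exact ENNReal.ofReal_le_ofReal (le_of_eq (by ring))

end core

/-! ### Rescaling and reflection -/

/-- The density of `Y / c` when `Y` has density `f`. A negative `c` reflects the line, which turns
the roots to the left of the true parameter into roots to the right of it. -/
def rescale (c : ℝ) (f : ℝ → ℝ) (y : ℝ) : ℝ := |c| * f (c * y)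

section rescale
variable {f : ℝ → ℝ} {r c : ℝ}

lemma rescale_isDensity (hf : IsDensity f) (hc : c ≠ 0) : IsDensity (rescale c f) := by
  refine ⟨fun x => mul_nonneg (abs_nonneg _) (hf.1 _), (hf.2.1.comp_mul_left' hc).const_mul _, ?_⟩
  unfold rescale
  rw [integral_const_mul, Measure.integral_comp_mul_left, hf.2.2, abs_inv, smul_eq_mul, mul_one,
    mul_inv_cancel₀ (abs_ne_zero.2 hc)]

lemma gaussPdf_scale (hr : 0 < r) (hc : |c| = r) (z : ℝ) :
    gaussPdf 1 z = |c| * gaussPdf r (c * z) := by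
  have hr2 : c ^ 2 = r ^ 2 := by rw [← sq_abs, hc]
  rw [gaussPdf, gaussPdf, hc, mul_pow, hr2, Real.sqrt_mul (x := 2 * π) (by positivity) (r ^ 2),
    Real.sqrt_sq hr.le]
  have e : -(r ^ 2 * z ^ 2) / (2 * r ^ 2) = -z ^ 2 / (2 * 1 ^ 2) := by field_simp
  rw [e]
  field_simp

lemma mix_rescale (hr : 0 < r) (hc : |c| = r) (x : ℝ) :
    mix (rescale c f) (ker 0) x = |c| * smoothed f r (c * x) := by
  have hc0 : c ≠ 0 := by rintro rfl; simp at hc; exact hr.ne hc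
  have ha : |c| ≠ 0 := abs_ne_zero.2 hc0
  rw [mix, smoothed, ker_zero]
  have e : ∀ y, rescale c f y * gaussPdf 1 (x - y) =
      |c| ^ 2 * (fun w => f w * gaussPdf r (c * x - w)) (c * y) := by
    intro y
    simp only [rescale, gaussPdf_scale hr hc (x - y), mul_sub]
    ring
  simp_rw [e]
  rw [integral_const_mul, Measure.integral_comp_mul_left (fun w => f w * gaussPdf r (c * x - w)),
    abs_inv, smul_eq_mul]
  field_simp

lemma sc_rescale (hf : IsDensity f) (hr : 0 < r) (hc : |c| = r) (x : ℝ) :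
    sc (rescale c f) x = c * score f r (c * x) := by
  have hc0 : c ≠ 0 := by rintro rfl; simp at hc; exact hr.ne hc
  have ha : |c| ≠ 0 := abs_ne_zero.2 hc0
  rw [← score_eq (rescale_isDensity hf hc0), score, score, smoothed_eq_mix, ← ker_zero]
  simp_rw [mix_rescale hr hc]
  rw [deriv_const_mul_field, deriv_comp_mul_left c (fun t => smoothed f r t), smul_eq_mul,
    mul_div_mul_left _ _ ha, mul_div_assoc]

lemma fi_rescale (hf : IsDensity f) (hr : 0 < r) (hc : |c| = r) :
    fi (rescale c f) = r ^ 2 * fisherInfo f r := by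
  have hc0 : c ≠ 0 := by rintro rfl; simp at hc; exact hr.ne hc
  have ha : |c| ≠ 0 := abs_ne_zero.2 hc0
  rw [fi, fisherInfo]
  have e : ∀ x, sc (rescale c f) x ^ 2 * mix (rescale c f) (ker 0) x =
      r ^ 2 * |c| * (fun w => score f r w ^ 2 * smoothed f r w) (c * x) := by
    intro x
    simp only [sc_rescale hf hr hc, mix_rescale hr hc]
    rw [mul_pow, ← sq_abs, hc]; ring
  simp_rw [e]
  rw [integral_const_mul,
    Measure.integral_comp_mul_left (fun w => score f r w ^ 2 * smoothed f r w), abs_inv, smul_eq_mul]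
  field_simp

lemma rescale_measurePreserving (hf : IsDensity f) (hr : 0 < r) (hc : |c| = r) (lam : ℝ) :
    MeasurePreserving (fun t => c⁻¹ * (t - lam))
      (volume.withDensity fun t => ENNReal.ofReal (smoothed f r (t - lam)))
      (law (rescale c f)) := by
  have hc0 : c ≠ 0 := by rintro rfl; simp at hc; exact hr.ne hc
  have ha : 0 < |c| := abs_pos.2 hc0
  have hT : Measurable fun t : ℝ => c⁻¹ * (t - lam) := by fun_prop
  refine ⟨hT, ?_⟩
  have hvol : Measure.map (fun t : ℝ => c⁻¹ * (t - lam)) volume =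
      ENNReal.ofReal |c| • (volume : Measure ℝ) := by
    have h1 : (fun t : ℝ => c⁻¹ * (t - lam)) = (c⁻¹ * ·) ∘ (· - lam) := rfl
    rw [h1, ← Measure.map_map (by fun_prop) (by fun_prop),
      (measurePreserving_sub_right volume lam).map_eq, Real.map_volume_mul_left (inv_ne_zero hc0),
      inv_inv]
  have hF := (F_continuous (rescale_isDensity hf hc0)).measurable
  have he : (fun t => ENNReal.ofReal (smoothed f r (t - lam))) = fun t =>
      (fun z => ENNReal.ofReal (|c|⁻¹ * mix (rescale c f) (ker 0) z)) (c⁻¹ * (t - lam)) := by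
    ext t
    simp only [mix_rescale hr hc, ← mul_assoc]
    rw [inv_mul_cancel₀ ha.ne', mul_inv_cancel₀ hc0, one_mul, one_mul]
  ext s hs
  rw [Measure.map_apply hT hs, withDensity_apply _ (hT hs), he,
    ← setLIntegral_map
      (f := fun z => ENNReal.ofReal (|c|⁻¹ * mix (rescale c f) (ker 0) z))
      (g := fun t => c⁻¹ * (t - lam)) hs (by fun_prop) hT, hvol, law, withDensity_apply _ hs,
    Measure.restrict_smul, lintegral_smul_measure, smul_eq_mul,
    ← lintegral_const_mul _ (by fun_prop)]
  congr 1; ext z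
  rw [← ENNReal.ofReal_mul ha.le, ← mul_assoc, mul_inv_cancel₀ ha.ne', one_mul]

/-- The one-sided bound at scale `r`; the sign of `c` selects the side. -/
lemma one_sided_rescaled (hf : IsDensity f) (hr : 0 < r) (hc : |c| = r) (hI : 0 < fisherInfo f r)
    {L γ em : ℝ} (hL : 1 ≤ L) (hγ : gammaMin ≤ γ) (hγ0 : 0 < γ) {n : ℕ} (hn : 0 < n) (lam : ℝ)
    (hem : γ * em ≤ r ^ 2 * √(fisherInfo f r)) :
    Measure.pi (fun _ : Fin n =>
        volume.withDensity fun t => ENNReal.ofReal (smoothed f r (t - lam)))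
        {x | ∃ ε, (1 + rateC / γ) * √(2 * L / (n * fisherInfo f r)) < ε ∧ ε ≤ em ∧
          c * ∑ i, score f r (x i - lam - c * (ε / r)) ≤ 0} ≤
      ENNReal.ofReal (exp (-L) / 2) := by
  have hc0 : c ≠ 0 := by rintro rfl; simp at hc; exact hr.ne hc
  have hg := rescale_isDensity hf hc0
  have hfi := fi_rescale hf hr hc
  have hprob := law_isProbabilityMeasure hg
  have hfi0 : 0 < fi (rescale c f) := by rw [hfi]; positivity
  have hmp := measurePreserving_pi
    (fun _ : Fin n => volume.withDensity fun t => ENNReal.ofReal (smoothed f r (t - lam)))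
    (fun _ : Fin n => law (rescale c f)) (f := fun _ t => c⁻¹ * (t - lam))
    (fun _ => rescale_measurePreserving hf hr hc lam)
  refine le_trans (measure_mono ?_) ((Measure.le_map_apply hmp.measurable.aemeasurable _).trans
    (hmp.map_eq ▸ one_sided hg hfi0 hL hγ hn))
  rintro x ⟨ε, h1, h2, h3⟩
  refine ⟨ε / r, ?_, ?_, ?_⟩
  · have e : √(2 * L / (n * (r ^ 2 * fisherInfo f r))) = √(2 * L / (n * fisherInfo f r)) / r := by
      rw [show 2 * L / (n * (r ^ 2 * fisherInfo f r)) = 2 * L / (n * fisherInfo f r) / r ^ 2 by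
        field_simp, Real.sqrt_div' _ (by positivity), Real.sqrt_sq hr.le]
    rw [hfi, e, ← mul_div_assoc]
    gcongr
  · rw [hfi, Real.sqrt_mul (by positivity), Real.sqrt_sq hr.le, div_le_div_iff₀ hr hγ0]
    calc ε * γ ≤ γ * em := by rw [mul_comm]; gcongr
      _ ≤ r * √(fisherInfo f r) * r := hem.trans (le_of_eq (by ring))
  · refine le_trans (le_of_eq ?_) h3
    rw [Finset.mul_sum]
    refine Finset.sum_congr rfl fun i _ => ?_
    rw [sc_rescale hf hr hc]
    congr 2
    field_simp

end rescale

/-- Since `r² I ≤ 1`, the smallness condition on `log (1 / (r √I))` forces `log (1 / δ) ≥ 1`: for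
`0 < log (1 / δ) < 1` its right-hand side is negative. -/
lemma one_le_log_of_cond {f : ℝ → ℝ} {r L γ : ℝ} (hf : IsDensity f) (hr : 0 < r)
    (hI : 0 < fisherInfo f r) (hL : 0 < L) (hγ : 0 < γ)
    (h : log (1 / (r * √(fisherInfo f r))) ≤ (1 / γ) * (L / log L)) : 1 ≤ L := by
  by_contra! hL1
  have hs : 0 < √(fisherInfo f r) := sqrt_pos.2 hI
  have hle : r * √(fisherInfo f r) ≤ 1 := by
    have h1 := fi_le_one (rescale_isDensity hf hr.ne')
    rw [fi_rescale hf hr (abs_of_pos hr)] at h1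
    have h2 : (r * √(fisherInfo f r)) ^ 2 ≤ 1 := by rwa [mul_pow, sq_sqrt hI.le]
    exact (sq_le_one_iff₀ (by positivity)).1 h2
  have h0 : 0 ≤ log (1 / (r * √(fisherInfo f r))) := by
    refine log_nonneg ?_
    rw [le_div_iff₀ (by positivity)]; linarith
  have : 1 / γ * (L / log L) < 0 :=
    mul_neg_of_pos_of_neg (by positivity) (div_neg_of_pos_of_neg hL (log_neg hL hL1))
  linarith

/-- The event of the theorem fails only on the union of the two one-sided events, each of
probability at most `δ / 2`. -/
lemma two_sided {f : ℝ → ℝ} {r : ℝ} (hf : IsDensity f) (hr : 0 < r) (hI : 0 < fisherInfo f r)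
    {lam em δ γ : ℝ} {n : ℕ} (hn : 0 < n) (hδ0 : 0 < δ) (hL : 1 ≤ log (1 / δ))
    (hγ : gammaMin ≤ γ) (hγ0 : 0 < γ) (hem : γ * em ≤ r ^ 2 * √(fisherInfo f r)) :
    ENNReal.ofReal (1 - δ) ≤
      Measure.pi (fun _ : Fin n =>
          volume.withDensity (fun t => ENNReal.ofReal (smoothed f r (t - lam))))
        {x : Fin n → ℝ | ∀ ε : ℝ,
          (1 + rateC / γ) * √(2 * log (1 / δ) / (n * fisherInfo f r)) < ε → ε ≤ em →
          (∑ i, score f r (x i - (lam - ε))) < 0 ∧ 0 < ∑ i, score f r (x i - (lam + ε))} := by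
  have hP : IsProbabilityMeasure
      (volume.withDensity fun t => ENNReal.ofReal (smoothed f r (t - lam))) := by
    have hlaw := law_isProbabilityMeasure (rescale_isDensity hf hr.ne')
    refine ⟨?_⟩
    rw [← Set.preimage_univ, (rescale_measurePreserving hf hr (abs_of_pos hr) lam).measure_preimage
      MeasurableSet.univ.nullMeasurableSet, measure_univ]
  have h1 := one_sided_rescaled hf hr (abs_of_pos hr) hI hL hγ hγ0 hn lam hem
  have h2 := one_sided_rescaled hf hr (c := -r) (by rw [abs_neg, abs_of_pos hr]) hI hL hγ hγ0 hn
    lam hem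
  have hexp : exp (-log (1 / δ)) = δ := by rw [one_div, log_inv, neg_neg, exp_log hδ0]
  rw [hexp] at h1 h2
  set μ := Measure.pi fun _ : Fin n =>
    volume.withDensity fun t => ENNReal.ofReal (smoothed f r (t - lam))
  set E := {x : Fin n → ℝ | ∀ ε : ℝ,
    (1 + rateC / γ) * √(2 * log (1 / δ) / (n * fisherInfo f r)) < ε → ε ≤ em →
    (∑ i, score f r (x i - (lam - ε))) < 0 ∧ 0 < ∑ i, score f r (x i - (lam + ε))} with hE
  have hbad : μ Eᶜ ≤ ENNReal.ofReal δ := by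
    calc μ Eᶜ ≤ μ (_ ∪ _) := measure_mono ?_
      _ ≤ _ := measure_union_le _ _
      _ ≤ ENNReal.ofReal (δ / 2) + ENNReal.ofReal (δ / 2) := add_le_add h1 h2
      _ = ENNReal.ofReal δ := by
        rw [← ENNReal.ofReal_add (by positivity) (by positivity), add_halves]
    intro x hx
    rw [hE, Set.mem_compl_iff, Set.mem_ofPred_eq] at hx
    push Not at hx
    obtain ⟨ε, ha, hb, h⟩ := hx
    have e1 : r * (ε / r) = ε := by field_simp
    by_cases hneg : (∑ i, score f r (x i - (lam - ε))) < 0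
    · refine Or.inl ⟨ε, ha, hb, mul_nonpos_of_nonneg_of_nonpos hr.le ?_⟩
      rw [e1]
      simpa only [sub_sub] using h hneg
    · refine Or.inr ⟨ε, ha, hb, mul_nonpos_of_nonpos_of_nonneg (neg_nonpos.2 hr.le) ?_⟩
      rw [neg_mul, e1]
      simp_rw [sub_sub, ← sub_eq_add_neg]
      exact not_lt.1 hneg
  rw [ENNReal.ofReal_sub _ hδ0.le, ENNReal.ofReal_one, tsub_le_iff_right]
  calc 1 = μ Set.univ := measure_univ.symm
    _ = μ (E ∪ Eᶜ) := by rw [Set.union_compl_self]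
    _ ≤ μ E + μ Eᶜ := measure_union_le _ _
    _ ≤ _ := by gcongr

/-- Local convergence of the smoothed MLE (Theorem 1 of the paper): there are universal
constants `C, γ₀ > 0` such that, for i.i.d. samples `x₁,…,xₙ` with density `f_r(· − λ)`,
under conditions (i)–(iv) on `r`, `ε_max`, `δ`, `γ`, with probability at least `1 − δ`
the empirical score `ŝ(μ) = ∑ᵢ s_r(xᵢ − μ)` satisfies `ŝ(λ−ε) < 0` and `ŝ(λ+ε) > 0`
for every `ε` with `(1 + C/γ)·√(2·log(1/δ)/(n·I_r)) < ε ≤ ε_max`. -/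
theorem local_mle_convergence :
    ∃ C : ℝ, 0 < C ∧ ∃ γ₀ : ℝ, 0 < γ₀ ∧
    ∀ (f : ℝ → ℝ) (r : ℝ), IsDensity f → 0 < r → 0 < fisherInfo f r →
    ∀ (lam εmax δ γ : ℝ) (n : ℕ), 0 < n → 0 < εmax → 0 < δ → δ < 1 → γ₀ ≤ γ →
      2 * εmax ≤ r →
      γ * εmax ≤ r ^ 2 * Real.sqrt (fisherInfo f r) →
      Real.log (1 / δ) / n ≤ 1 / γ ^ 2 →
      Real.log (1 / (r * Real.sqrt (fisherInfo f r))) ≤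
        (1 / γ) * (Real.log (1 / δ) / Real.log (Real.log (1 / δ))) →
      ENNReal.ofReal (1 - δ) ≤
        Measure.pi (fun _ : Fin n =>
            MeasureTheory.volume.withDensity
              (fun t => ENNReal.ofReal (smoothed f r (t - lam))))
          {x : Fin n → ℝ | ∀ ε : ℝ,
            (1 + C / γ) * Real.sqrt (2 * Real.log (1 / δ) / (n * fisherInfo f r)) < ε →
            ε ≤ εmax →
            (∑ i, score f r (x i - (lam - ε))) < 0 ∧
            0 < ∑ i, score f r (x i - (lam + ε))} := by
  have hpq := one_le_pqC
  have hS := one_le_momS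
  have hpq0 : 0 < pqC := by linarith
  have hS0 : 0 < momS := by linarith
  have hg0 : 0 < gammaMin := by unfold gammaMin; positivity
  refine ⟨rateC, by unfold rateC; positivity, gammaMin, hg0, ?_⟩
  intro f r hf hr hI lam em δ γ n hn _ hδ0 hδ1 hγ _ hem _ hiv
  have hγ0 := hg0.trans_le hγ
  have hL0 : 0 < log (1 / δ) := log_pos (one_lt_one_div hδ0 hδ1)
  exact two_sided hf hr hI hn hδ0 (one_le_log_of_cond hf hr hI hL0 hγ0 hiv) hγ hγ0 hem


end
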